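/- arXiv:2004.05929 — 5 statements merged into one kernel-verified Lean document; each statement's English description precedes it below -/
import Mathlib

section
/- Let γ₁, γ₂ be real numbers and let ψ be an approximation function with ∑_q (ψ(q)·φ(q)/q)² = ∞, where φ is Euler's totient function. Then the set of points (x₁,x₂) ∈ [0,1]² such that max{‖q x₁ − γ₁‖, ‖q x₂ − γ₂‖} ≤ ψ(q) for infinitely many positive integers q has two-dimensional Lebesgue measure one. -/
open MeasureTheory Filter Real

/-- Distance from a real number to the nearest integer. -/
noncomputable def dnint (x : ℝ) : ℝ := |x - round x|

lemma tor_count (q r : ℕ) (hq : 0 < q) (hqr : Nat.Coprime q r) (y : UnitAddCircle) (b : ℝ)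
    (hb : 0 ≤ b) :
    (((Finset.range q).filter
      (fun k : ℕ => ‖y + r • (((k : ℝ) / q : ℝ) : UnitAddCircle)‖ ≤ b)).card : ℝ) ≤ 2 * b * q + 1 := by
  have hq' : (0:ℝ) < q := by exact_mod_cast hq
  induction y using QuotientAddGroup.induction_on with
  | H y =>
  set f : ℕ → ℤ := fun k => r * k - q * round (y + r * (k / q : ℝ)) with hf
  have hcard : ((Finset.range q).filter
      (fun k : ℕ => ‖(y : UnitAddCircle) + r • (((k : ℝ) / q : ℝ) : UnitAddCircle)‖ ≤ b)).card
      ≤ (Finset.Icc ⌈-(q * y) - q * b⌉ ⌊-(q*y) + q * b⌋).card := by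
    apply Finset.card_le_card_of_injOn f
    · intro k hk
      simp only [Finset.coe_filter, Finset.mem_range, Set.mem_ofPred_eq] at hk
      obtain ⟨hk, hn⟩ := hk
      have e : (y : UnitAddCircle) + r • (((k : ℝ) / q : ℝ) : UnitAddCircle)
          = ((y + r * (k / q : ℝ) : ℝ) : UnitAddCircle) := by
        rw [← AddCircle.coe_nsmul, ← AddCircle.coe_add, nsmul_eq_mul]
      rw [e, UnitAddCircle.norm_eq, abs_le] at hn
      have e2 : ((f k : ℤ) : ℝ)
          = q * ((y + r * (k / q : ℝ)) - round (y + r * (k / q : ℝ))) - q * y := by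
        simp only [hf]; push_cast; field_simp; ring
      simp only [Finset.coe_Icc, Set.mem_Icc, Int.ceil_le, Int.le_floor]
      rw [e2]
      constructor <;> nlinarith
    · intro k hk l hl h
      simp only [Finset.coe_filter, Finset.mem_range, Set.mem_ofPred_eq] at hk hl
      simp only [hf] at h
      have h1 : (q : ℤ) ∣ r * ((k : ℤ) - l) :=
        ⟨round (y + r * (k / q : ℝ)) - round (y + r * (l / q : ℝ)), by linarith⟩
      have h2 : (q : ℤ) ∣ (k : ℤ) - l :=
        (Nat.isCoprime_iff_coprime.mpr hqr).dvd_of_dvd_mul_left h1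
      have h3 : (k : ℤ) - l = 0 := by
        apply Int.eq_zero_of_abs_lt_dvd h2
        rw [abs_lt]; constructor <;> omega
      omega
  refine (Nat.cast_le.mpr hcard).trans ?_
  rw [Int.card_Icc]
  have h1 := Int.floor_le (-(q*y) + q * b)
  have h2 := Int.le_ceil (-(q*y) - q * b)
  have h0 : 0 ≤ q * b := by positivity
  rcases le_total 0 (⌊-(q*y) + q * b⌋ + 1 - ⌈-(q * y) - q * b⌉) with h | h
  · have : (((⌊-(q*y) + q * b⌋ + 1 - ⌈-(q * y) - q * b⌉).toNat : ℤ) : ℝ)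
      = ((⌊-(q*y) + q * b⌋ + 1 - ⌈-(q * y) - q * b⌉ : ℤ) : ℝ) := by rw [Int.toNat_of_nonneg h]
    rw [Int.cast_natCast] at this
    rw [this]; push_cast; linarith
  · rw [Int.toNat_of_nonpos h]; push_cast; linarith

/-- the one-dimensional approximation set -/
def torA (q : ℕ) (g : UnitAddCircle) (a : ℝ) : Set UnitAddCircle := {x | ‖q • x - g‖ ≤ a}

lemma torA_meas (q : ℕ) (g : UnitAddCircle) (a : ℝ) : MeasurableSet (torA q g a) := by
  apply IsClosed.measurableSet
  exact isClosed_le (by fun_prop) continuous_const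

lemma tor_mp (q : ℕ) (hq : 0 < q) : MeasurePreserving (fun x : UnitAddCircle => q • x) := by
  rcases Nat.lt_or_ge 1 q with h | h
  · exact (AddCircle.ergodic_nsmul h).toMeasurePreserving
  · have : q = 1 := by omega
    subst this
    simp only [one_smul]
    exact MeasurePreserving.id (volume : Measure UnitAddCircle)

lemma torA_vol (q : ℕ) (hq : 0 < q) (g : UnitAddCircle) (a : ℝ) :
    volume.real (torA q g a) = max (min 1 (2 * a)) 0 := by
  have : torA q g a = (fun x : UnitAddCircle => q • x) ⁻¹' (Metric.closedBall g a) := by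
    ext x; simp [torA, dist_eq_norm]
  rw [measureReal_def, this, (tor_mp q hq).measure_preimage
    Metric.isClosed_closedBall.measurableSet.nullMeasurableSet, AddCircle.volume_closedBall,
    ENNReal.toReal_ofReal']

lemma torA_trans (q : ℕ) (hq : 0 < q) (g : UnitAddCircle) (a : ℝ) (k : ℤ) (x : UnitAddCircle) :
    x + (((k : ℝ) / q : ℝ) : UnitAddCircle) ∈ torA q g a ↔ x ∈ torA q g a := by
  have hq' : (q:ℝ) ≠ 0 := by exact_mod_cast hq.ne'
  have : q • (x + (((k : ℝ) / q : ℝ) : UnitAddCircle)) = q • x := by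
    rw [smul_add, ← AddCircle.coe_nsmul, nsmul_eq_mul, mul_div_cancel₀ _ hq', add_eq_left,
      AddCircle.coe_eq_zero_iff]
    exact ⟨k, by simp⟩
  simp [torA, this]

lemma tor_overlap_coprime (q r : ℕ) (hq : 0 < q) (hqr : Nat.Coprime q r)
    (g h : UnitAddCircle) (a b : ℝ) (ha : 0 ≤ a) (hb : 0 ≤ b) :
    volume.real (torA q g a ∩ torA r h b) ≤ 2 * a * (2 * b + 1 / q) := by
  have hq' : (0:ℝ) < q := by exact_mod_cast hq
  set A := torA q g a with hA
  set B := torA r h b with hB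
  have hAm : MeasurableSet A := torA_meas _ _ _
  have hBm : MeasurableSet B := torA_meas _ _ _
  set t : ℕ → UnitAddCircle := fun k => (((k : ℝ) / q : ℝ) : UnitAddCircle) with ht
  have h1 : ∀ k, volume.real (A ∩ B) = ∫ x in A, ((fun x => x + t k) ⁻¹' B).indicator 1 x := by
    intro k
    have hm : MeasurableSet ((fun x => x + t k) ⁻¹' B) := hBm.preimage (by fun_prop)
    rw [integral_indicator_one hm, measureReal_restrict_apply hm, measureReal_def, measureReal_def,
      ← measure_preimage_add_right volume (t k) (A ∩ B)]
    congr 2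
    ext x
    have := torA_trans q hq g a k x
    simp only [Int.cast_natCast] at this
    simp only [Set.mem_preimage, Set.mem_inter_iff, hA, ht, this]
    tauto
  have h2 : q * volume.real (A ∩ B)
      = ∫ x in A, ∑ k ∈ Finset.range q, ((fun x => x + t k) ⁻¹' B).indicator (1 : UnitAddCircle → ℝ) x := by
    rw [integral_finsetSum]
    · rw [Finset.sum_congr rfl (fun k _ => (h1 k).symm)]; simp
    · intro k _
      exact ((integrable_const (1:ℝ)).indicator (hBm.preimage (by fun_prop)))
  have h3 : q * volume.real (A ∩ B) ≤ ∫ x in A, (2 * b * q + 1) := by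
    rw [h2]
    apply integral_mono
    · apply integrable_finsetSum
      intro k _
      exact ((integrable_const (1:ℝ)).indicator (hBm.preimage (by fun_prop)))
    · exact integrable_const _
    · intro x
      have := tor_count q r hq hqr (r • x - h) b hb
      refine le_trans (le_of_eq ?_) this
      rw [Finset.card_filter]
      push_cast
      refine Finset.sum_congr rfl fun k _ => ?_
      have e : r • x - h + r • t k = r • (x + t k) - h := by rw [smul_add]; abel
      simp only [Set.indicator, Set.mem_preimage, hB, torA, Set.mem_ofPred_eq, Pi.one_apply]
      rw [← e]
  rw [setIntegral_const, smul_eq_mul, hA, torA_vol q hq] at h3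
  have h4 : max (min 1 (2 * a)) 0 ≤ 2 * a := by
    apply max_le (min_le_right _ _); positivity
  have h5 : q * volume.real (A ∩ B) ≤ 2 * a * (2 * b * q + 1) :=
    h3.trans (by gcongr)
  have h6 : 2 * a * (2 * b * q + 1) = q * (2 * a * (2 * b + 1 / q)) := by field_simp
  rw [h6] at h5
  exact le_of_mul_le_mul_left h5 hq'

lemma tor_overlap (q r : ℕ) (hq : 0 < q) (hr : 0 < r)
    (g h : UnitAddCircle) (a b : ℝ) (ha : 0 ≤ a) (hb : 0 ≤ b) :
    volume.real (torA q g a ∩ torA r h b) ≤ 2 * a * (2 * b + (Nat.gcd q r : ℝ) / q) := by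
  set d := Nat.gcd q r with hd
  have hd0 : 0 < d := Nat.gcd_pos_of_pos_left _ hq
  obtain ⟨q', hq'⟩ : d ∣ q := Nat.gcd_dvd_left _ _
  obtain ⟨r', hr'⟩ : d ∣ r := Nat.gcd_dvd_right _ _
  have hcop : Nat.Coprime q' r' := by
    have := Nat.coprime_div_gcd_div_gcd (m := q) (n := r) hd0
    rw [← hd, hq', hr', Nat.mul_div_cancel_left _ hd0, Nat.mul_div_cancel_left _ hd0] at this
    exact this
  have hq0 : 0 < q' := Nat.pos_of_ne_zero (by rintro rfl; simp at hq'; omega)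
  have e : torA q g a ∩ torA r h b
      = (fun x : UnitAddCircle => d • x) ⁻¹' (torA q' g a ∩ torA r' h b) := by
    ext x
    simp only [torA, Set.mem_inter_iff, Set.mem_ofPred_eq, Set.mem_preimage, smul_smul]
    rw [hq', hr', mul_comm d, mul_comm d]
  rw [measureReal_def, e, (tor_mp d hd0).measure_preimage
    ((torA_meas _ _ _).inter (torA_meas _ _ _)).nullMeasurableSet, ← measureReal_def]
  refine (tor_overlap_coprime q' r' hq0 hcop g h a b ha hb).trans (le_of_eq ?_)
  have : (q:ℝ) = d * q' := by exact_mod_cast hq'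
  rw [this]
  have : (d:ℝ) ≠ 0 := by exact_mod_cast hd0.ne'
  have : (q':ℝ) ≠ 0 := by exact_mod_cast hq0.ne'
  field_simp

lemma tor_totient_mul_le (d e : ℕ) : Nat.totient (d * e) ≤ Nat.totient d * e := by
  induction e using Nat.recOnMul generalizing d with
  | zero => simp
  | one => simp
  | prime p hp =>
    rw [mul_comm d p, mul_comm _ p]
    by_cases h : p ∣ d
    · exact (Nat.totient_mul_of_prime_of_dvd hp h).le
    · rw [Nat.totient_mul_of_prime_of_not_dvd hp h]
      exact Nat.mul_le_mul_right _ (Nat.sub_le _ _)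
  | mul a b ha hb =>
    calc Nat.totient (d * (a * b)) = Nat.totient ((d * a) * b) := by rw [mul_assoc]
      _ ≤ Nat.totient (d * a) * b := hb _
      _ ≤ Nat.totient d * a * b := Nat.mul_le_mul_right _ (ha _)
      _ = _ := by ring

lemma tor_gcd_sum (q : ℕ) (hq : 0 < q) :
    ∑ r ∈ Finset.Icc 1 q, ((Nat.totient r : ℝ) / r) ^ 2 * ((Nat.gcd q r : ℝ) / q) ^ 2 ≤ 1 := by
  have hq' : (0:ℝ) < q := by exact_mod_cast hq
  have key : ∀ r ∈ Finset.Icc 1 q, ((Nat.totient r : ℝ) / r) ^ 2 * ((Nat.gcd q r : ℝ) / q) ^ 2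
      ≤ (Nat.totient (Nat.gcd q r) : ℝ) * (Nat.gcd q r) / q ^ 2 := by
    intro r hr
    have hr0 : 0 < r := (Finset.mem_Icc.mp hr).1
    have hr1 : (0:ℝ) < r := by exact_mod_cast hr0
    set d := Nat.gcd q r with hd
    have hd0 : 0 < d := Nat.gcd_pos_of_pos_left _ hq
    have hd1 : (0:ℝ) < d := by exact_mod_cast hd0
    obtain ⟨e, he⟩ : d ∣ r := Nat.gcd_dvd_right _ _
    have h1 : (Nat.totient r : ℝ) / r ≤ 1 := by
      rw [div_le_one hr1]; exact_mod_cast Nat.totient_le r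
    have h2 : (Nat.totient r : ℝ) / r ≤ (Nat.totient d : ℝ) / d := by
      rw [div_le_div_iff₀ hr1 hd1]
      have : Nat.totient r ≤ Nat.totient d * e := by
        rw [he]
        exact tor_totient_mul_le d e
      calc (Nat.totient r : ℝ) * d ≤ (Nat.totient d * e) * d := by
            gcongr; exact_mod_cast this
        _ = Nat.totient d * r := by rw [he]; push_cast; ring
    have h0 : 0 ≤ (Nat.totient r : ℝ) / r := by positivity
    calc ((Nat.totient r : ℝ) / r) ^ 2 * ((d : ℝ) / q) ^ 2
        ≤ ((Nat.totient d : ℝ) / d) * ((d : ℝ) / q) ^ 2 := by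
          gcongr; nlinarith
      _ = _ := by field_simp
  refine (Finset.sum_le_sum key).trans ?_
  rw [← Finset.sum_fiberwise_of_maps_to (s := Finset.Icc 1 q) (t := q.divisors)
    (g := fun r => Nat.gcd q r)
    (fun r _ => Nat.mem_divisors.mpr ⟨Nat.gcd_dvd_left _ _, hq.ne'⟩)]
  have key2 : ∀ d ∈ q.divisors, ∑ r ∈ Finset.Icc 1 q with Nat.gcd q r = d,
      (Nat.totient (Nat.gcd q r) : ℝ) * (Nat.gcd q r) / q ^ 2 ≤ (Nat.totient d : ℝ) / q := by
    intro d hd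
    have hdq : d ∣ q := (Nat.mem_divisors.mp hd).1
    have hd0 : 0 < d := Nat.pos_of_dvd_of_pos hdq hq
    have hd1 : (0:ℝ) < d := by exact_mod_cast hd0
    have e : ∑ r ∈ Finset.Icc 1 q with Nat.gcd q r = d,
        (Nat.totient (Nat.gcd q r) : ℝ) * (Nat.gcd q r) / q ^ 2
        = ∑ r ∈ Finset.Icc 1 q with Nat.gcd q r = d, (Nat.totient d : ℝ) * d / q ^ 2 := by
      refine Finset.sum_congr rfl fun r hr => ?_
      rw [(Finset.mem_filter.mp hr).2]
    rw [e, Finset.sum_const, nsmul_eq_mul]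
    have hc : ((Finset.Icc 1 q).filter (fun r => Nat.gcd q r = d)).card ≤ q / d := by
      rw [← Nat.Ioc_filter_dvd_card_eq_div q d]
      apply Finset.card_le_card
      intro r hr
      simp only [Finset.mem_filter, Finset.mem_Icc, Finset.mem_Ioc] at hr ⊢
      refine ⟨⟨by omega, hr.1.2⟩, ?_⟩
      rw [← hr.2]; exact Nat.gcd_dvd_right _ _
    have hc' : (((Finset.Icc 1 q).filter (fun r => Nat.gcd q r = d)).card : ℝ) ≤ (q:ℝ) / d :=
      (Nat.cast_le.mpr hc).trans Nat.cast_div_le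
    calc _ ≤ (q:ℝ) / d * ((Nat.totient d : ℝ) * d / q ^ 2) := by gcongr
      _ = _ := by field_simp
  refine (Finset.sum_le_sum key2).trans ?_
  rw [← Finset.sum_div, ← Nat.cast_sum, Nat.sum_totient, div_self hq'.ne']


def torE (q : ℕ) (g : Fin 2 → UnitAddCircle) (a : ℝ) : Set (Fin 2 → UnitAddCircle) :=
  Set.pi Set.univ (fun i => torA q (g i) a)

lemma torE_meas (q : ℕ) (g : Fin 2 → UnitAddCircle) (a : ℝ) : MeasurableSet (torE q g a) :=
  MeasurableSet.univ_pi fun _ => torA_meas _ _ _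

lemma torE_vol (q : ℕ) (hq : 0 < q) (g : Fin 2 → UnitAddCircle) (a : ℝ) (ha : 0 ≤ a)
    (ha' : a ≤ 1 / 2) : volume.real (torE q g a) = 4 * a ^ 2 := by
  rw [measureReal_def, torE, volume_pi_pi, ENNReal.toReal_prod]
  simp only [← measureReal_def, torA_vol q hq, Fin.prod_univ_two]
  rw [min_eq_right (by linarith), max_eq_left (by linarith)]
  ring

lemma torE_overlap (q r : ℕ) (hq : 0 < q) (hr : 0 < r) (g : Fin 2 → UnitAddCircle) (a b : ℝ)
    (ha : 0 ≤ a) (hb : 0 ≤ b) :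
    volume.real (torE q g a ∩ torE r g b)
      ≤ 32 * a ^ 2 * b ^ 2 + 8 * a ^ 2 * ((Nat.gcd q r : ℝ) / q) ^ 2 := by
  rw [measureReal_def, torE, torE, ← Set.pi_inter_distrib, volume_pi_pi, ENNReal.toReal_prod]
  simp only [← measureReal_def, Fin.prod_univ_two]
  have h0 := tor_overlap q r hq hr (g 0) (g 0) a b ha hb
  have h1 := tor_overlap q r hq hr (g 1) (g 1) a b ha hb
  set c := (Nat.gcd q r : ℝ) / q with hc
  have hc0 : 0 ≤ c := by positivity
  calc _ ≤ (2 * a * (2 * b + c)) * (2 * a * (2 * b + c)) := by gcongr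
    _ ≤ _ := by nlinarith [mul_nonneg (sq_nonneg a) (sq_nonneg (2 * b - c))]

lemma torE_fourier (q : ℕ) (g : Fin 2 → UnitAddCircle) (a : ℝ) (n : Fin 2 → ℤ) (i : Fin 2)
    (hi : n i ≠ 0) (hq : |n i| < q) :
    ∫ x in torE q g a, UnitAddTorus.mFourier n x = 0 := by
  have hq0 : 0 < q := by
    have := abs_nonneg (n i); omega
  have hqr : (q:ℂ) ≠ 0 := by exact_mod_cast hq0.ne'
  set s : Fin 2 → UnitAddCircle := Pi.single i (((1:ℤ) : ℝ) / q : ℝ) with hs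
  have hE : ∀ x, x + s ∈ torE q g a ↔ x ∈ torE q g a := by
    intro x
    simp only [torE, Set.mem_pi, Set.mem_univ, true_imp_iff]
    refine forall_congr' fun j => ?_
    by_cases hj : j = i
    · subst hj
      simp only [hs, Pi.add_apply, Pi.single_eq_same]
      exact torA_trans q hq0 _ _ 1 _
    · simp [hs, hj]
  set c : ℂ := fourier (n i) ((((1:ℤ) : ℝ) / q : ℝ) : UnitAddCircle) with hc
  have hf : ∀ x, UnitAddTorus.mFourier n (x + s) = c * UnitAddTorus.mFourier n x := by
    intro x
    simp only [UnitAddTorus.mFourier, ContinuousMap.coe_mk, Pi.add_apply, fourier_apply, smul_add,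
      AddCircle.toCircle_add, Circle.coe_mul, Finset.prod_mul_distrib]
    rw [mul_comm]
    congr 1
    rw [Finset.prod_eq_single i]
    · simp [hs, hc, fourier_apply]
    · intro j _ hj
      simp [hs, hj]
    · simp
  have hc1 : c ≠ 1 := by
    rw [hc, fourier_coe_apply]
    intro h
    rw [Complex.exp_eq_one_iff] at h
    obtain ⟨m, hm⟩ := h
    have h2 : (2 * π * Complex.I : ℂ) ≠ 0 := Complex.two_pi_I_ne_zero
    have h3 : (n i : ℂ) = m * q := by
      push_cast at hm
      field_simp at hm
      have := mul_left_cancel₀ h2 (a := 2 * π * Complex.I) (b := (n i : ℂ)) (c := m * q)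
        (by linear_combination (2 * π * Complex.I) * hm)
      exact this
    have h4 : n i = m * q := by exact_mod_cast h3
    apply hi
    exact Int.eq_zero_of_abs_lt_dvd ⟨m, by rw [h4]; ring⟩ hq
  have hI : ∫ x in torE q g a, UnitAddTorus.mFourier n x
      = c * ∫ x in torE q g a, UnitAddTorus.mFourier n x := by
    rw [← integral_const_mul, ← integral_indicator (torE_meas _ _ _),
      ← integral_indicator (torE_meas _ _ _),
      ← integral_add_right_eq_self _ s]
    congr 1
    ext x
    by_cases hx : x ∈ torE q g a
    · rw [Set.indicator_of_mem ((hE x).mpr hx), Set.indicator_of_mem hx, hf]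
    · rw [Set.indicator_of_notMem (fun h => hx ((hE x).mp h)), Set.indicator_of_notMem hx]
  have : (1 - c) * ∫ x in torE q g a, UnitAddTorus.mFourier n x = 0 := by
    linear_combination hI
  rcases mul_eq_zero.mp this with h | h
  · exact absurd (sub_eq_zero.mp h).symm hc1
  · exact h

open scoped Topology in
lemma tor_weak {H : Type*} [NormedAddCommGroup H] [InnerProductSpace ℂ H] (G : ℕ → H) (K : ℝ)
    (hK : ∀ᶠ n in atTop, ‖G n‖ ≤ K) (s : Set H)
    (hs : (Submodule.span ℂ s).topologicalClosure = ⊤)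
    (h : ∀ e ∈ s, Tendsto (fun n => inner ℂ (G n) e) atTop (𝓝 0)) (u : H) :
    Tendsto (fun n => inner ℂ (G n) u) atTop (𝓝 0) := by
  have hspan : ∀ e ∈ Submodule.span ℂ s, Tendsto (fun n => inner ℂ (G n) e) atTop (𝓝 0) := by
    intro e he
    induction he using Submodule.span_induction with
    | mem x hx => exact h x hx
    | zero => simp
    | add x y _ _ hx hy => simpa [inner_add_right] using hx.add hy
    | smul a x _ hx => simpa [inner_smul_right] using hx.const_mul a
  rw [Metric.tendsto_nhds]
  intro ε hε
  have hu : u ∈ closure (Submodule.span ℂ s : Set H) := by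
    rw [← Submodule.topologicalClosure_coe, hs]; trivial
  have hK1 : 0 < |K| + 1 := by positivity
  obtain ⟨e, he, hd⟩ := Metric.mem_closure_iff.mp hu (ε / 2 / (|K| + 1)) (by positivity)
  filter_upwards [hK, Metric.tendsto_nhds.mp (hspan e he) (ε / 2) (by positivity)] with n hn hn2
  rw [dist_zero_right] at hn2 ⊢
  have e1 : inner ℂ (G n) u = inner ℂ (G n) e + inner ℂ (G n) (u - e) := by
    rw [← inner_add_right]; congr 1; abel
  have e2 : ‖inner ℂ (G n) (u - e)‖ ≤ ε / 2 := by
    refine (norm_inner_le_norm _ _).trans ?_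
    rw [dist_eq_norm] at hd
    calc ‖G n‖ * ‖u - e‖ ≤ (|K| + 1) * (ε / 2 / (|K| + 1)) := by
          gcongr
          exact hn.trans ((le_abs_self K).trans (by linarith))
      _ = ε / 2 := by field_simp
  rw [e1]
  linarith [norm_add_le (inner ℂ (G n) e) (inner ℂ (G n) (u - e))]

lemma tor_span : (Submodule.span ℂ (Set.range (fun n : Fin 2 → ℤ =>
    ContinuousMap.toLp (E := ℂ) 2 (volume : Measure (Fin 2 → UnitAddCircle)) ℂ
      (UnitAddTorus.mFourier n)))).topologicalClosure = ⊤ := by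
  simpa only [Submodule.map_span, ContinuousLinearMap.coe_coe, ← Set.range_comp,
    Function.comp_def] using
    (ContinuousMap.toLp_denseRange ℂ (volume : Measure (Fin 2 → UnitAddCircle)) ℂ
      (by simp : (2 : ENNReal) ≠ ⊤)).topologicalClosure_map_submodule
      UnitAddTorus.span_mFourier_closure_eq_top

lemma tor_second_moment (g : Fin 2 → UnitAddCircle) (ψ : ℕ → ℝ) (h0 : ∀ q, 0 ≤ ψ q) (Q : ℕ)
    (w : ℕ → ℝ) (hw : ∀ q, w q = ((Nat.totient q : ℝ) / q) ^ 2) (S : ℝ)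
    (hS : S = ∑ q ∈ Finset.Icc 1 Q, w q * ψ q ^ 2) :
    ∑ q ∈ Finset.Icc 1 Q, ∑ r ∈ Finset.Icc 1 Q,
      w q * w r * volume.real (torE q g (ψ q) ∩ torE r g (ψ r)) ≤ 64 * S ^ 2 + 16 * S := by
  have hw0 : ∀ q, 0 ≤ w q := fun q => by rw [hw]; positivity
  set k : ℕ → ℕ → ℝ := fun q r => 32 * (w q * ψ q ^ 2) * (w r * ψ r ^ 2)
    + if r ≤ q then 8 * (w q * ψ q ^ 2) * (w r * ((Nat.gcd q r : ℝ) / q) ^ 2) else 0 with hk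
  have hk0 : ∀ q r, 0 ≤ k q r := by
    intro q r
    have := hw0 q
    have := hw0 r
    simp only [hk]
    split_ifs <;> positivity
  have hmain : ∀ q r, 0 < q → 0 < r → r ≤ q →
      w q * w r * volume.real (torE q g (ψ q) ∩ torE r g (ψ r)) ≤ k q r := by
    intro q r hq hr hrq
    have := torE_overlap q r hq hr g (ψ q) (ψ r) (h0 q) (h0 r)
    have h3 : 0 ≤ w q * w r := mul_nonneg (hw0 q) (hw0 r)
    simp only [hk, if_pos hrq]
    calc _ ≤ w q * w r * (32 * ψ q ^ 2 * ψ r ^ 2 + 8 * ψ q ^ 2 * ((Nat.gcd q r : ℝ) / q) ^ 2) := by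
          gcongr
      _ = _ := by ring
  have hsum : ∑ q ∈ Finset.Icc 1 Q, ∑ r ∈ Finset.Icc 1 Q, k q r ≤ 32 * S ^ 2 + 8 * S := by
    simp only [hk, Finset.sum_add_distrib]
    apply add_le_add
    · apply le_of_eq
      simp_rw [← Finset.mul_sum, ← Finset.sum_mul, ← hS, ← Finset.mul_sum, ← hS]
      ring
    · rw [hS, Finset.mul_sum]
      refine Finset.sum_le_sum fun q hq => ?_
      obtain ⟨hq1, hq2⟩ := Finset.mem_Icc.mp hq
      rw [← Finset.sum_filter]
      have e : (Finset.Icc 1 Q).filter (fun r => r ≤ q) = Finset.Icc 1 q := by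
        ext r; simp only [Finset.mem_filter, Finset.mem_Icc]; omega
      rw [e, ← Finset.mul_sum]
      have := tor_gcd_sum q hq1
      simp_rw [← hw] at this
      have h3 : 0 ≤ 8 * (w q * ψ q ^ 2) := by have := hw0 q; positivity
      nlinarith
  have hb : ∀ q ∈ Finset.Icc 1 Q, ∀ r ∈ Finset.Icc 1 Q,
      w q * w r * volume.real (torE q g (ψ q) ∩ torE r g (ψ r)) ≤ k q r + k r q := by
    intro q hq r hr
    have hq1 := (Finset.mem_Icc.mp hq).1
    have hr1 := (Finset.mem_Icc.mp hr).1
    rcases le_total r q with h | h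
    · linarith [hmain q r hq1 hr1 h, hk0 r q]
    · have := hmain r q hr1 hq1 h
      rw [Set.inter_comm, mul_comm (w r)] at this
      linarith [hk0 q r]
  calc _ ≤ ∑ q ∈ Finset.Icc 1 Q, ∑ r ∈ Finset.Icc 1 Q, (k q r + k r q) :=
        Finset.sum_le_sum fun q hq => Finset.sum_le_sum fun r hr => hb q hq r hr
    _ = (∑ q ∈ Finset.Icc 1 Q, ∑ r ∈ Finset.Icc 1 Q, k q r)
        + ∑ q ∈ Finset.Icc 1 Q, ∑ r ∈ Finset.Icc 1 Q, k q r := by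
        simp_rw [Finset.sum_add_distrib]
        congr 1
        exact Finset.sum_comm
    _ ≤ _ := by linarith

lemma tor_univ : (volume : Measure (Fin 2 → UnitAddCircle)).real Set.univ = 1 := by
  rw [measureReal_def, ← Set.pi_univ Set.univ, volume_pi_pi]
  simp

open scoped Topology in
lemma tor_lim (a : ℕ → ℝ) (ha : Tendsto a atTop (𝓝 0)) (c : ℂ) :
    Tendsto (fun n => ((a n : ℝ) : ℂ) * c) atTop (𝓝 0) := by
  have := ((Complex.continuous_ofReal.tendsto 0).comp ha).mul_const c
  simpa using this

set_option maxHeartbeats 1000000 in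
open scoped Topology in
lemma tor_null (g : Fin 2 → UnitAddCircle) (ψ : ℕ → ℝ) (h0 : ∀ q, 0 ≤ ψ q)
    (h1 : ∀ q, ψ q ≤ 1 / 2)
    (w : ℕ → ℝ) (hw : ∀ q, w q = ((Nat.totient q : ℝ) / q) ^ 2)
    (hdiv : Tendsto (fun Q : ℕ => ∑ q ∈ Finset.Icc 1 Q, w q * ψ q ^ 2) atTop atTop)
    (B : Set (Fin 2 → UnitAddCircle)) (hB : MeasurableSet B) (M : ℝ)
    (hM : ∀ x ∈ B, ∀ Q : ℕ,
      ∑ q ∈ Finset.Icc 1 Q, w q * (torE q g (ψ q)).indicator (fun _ => (1:ℝ)) x ≤ M) :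
    volume B = 0 := by
  have hw0 : ∀ q, 0 ≤ w q := fun q => by rw [hw]; positivity
  set S : ℕ → ℝ := fun Q => ∑ q ∈ Finset.Icc 1 Q, w q * ψ q ^ 2 with hS
  set v : ℕ → Lp ℂ 2 (volume : Measure (Fin 2 → UnitAddCircle)) := fun q =>
    indicatorConstLp 2 (torE_meas q g (ψ q)) (measure_ne_top _ _) (1:ℂ) with hv
  set o : Lp ℂ 2 (volume : Measure (Fin 2 → UnitAddCircle)) :=
    indicatorConstLp 2 MeasurableSet.univ (measure_ne_top _ _) (1:ℂ) with ho
  set u : Lp ℂ 2 (volume : Measure (Fin 2 → UnitAddCircle)) :=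
    indicatorConstLp 2 hB (measure_ne_top _ _) (1:ℂ) with hu
  set G : ℕ → Lp ℂ 2 (volume : Measure (Fin 2 → UnitAddCircle)) := fun Q =>
    (((S Q)⁻¹ : ℝ) : ℂ) • ∑ q ∈ Finset.Icc 1 Q,
      ((w q : ℝ) : ℂ) • (v q - ((4 * ψ q ^ 2 : ℝ) : ℂ) • o) with hG
  have ho1 : ‖o‖ ≤ 1 := by
    rw [ho]
    refine norm_indicatorConstLp_le.trans ?_
    simp [tor_univ]
  -- norm bound
  have hK : ∀ᶠ Q in atTop, ‖G Q‖ ≤ 13 := by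
    filter_upwards [hdiv.eventually_ge_atTop 1] with Q hQ
    change 1 ≤ S Q at hQ
    have hSp : 0 < S Q := by linarith
    have hsq : ‖∑ q ∈ Finset.Icc 1 Q, ((w q : ℝ) : ℂ) • v q‖ ^ 2 ≤ 64 * S Q ^ 2 + 16 * S Q := by
      refine le_trans (le_of_eq ?_) (tor_second_moment g ψ h0 Q w hw (S Q) rfl)
      rw [← inner_self_eq_norm_sq (𝕜 := ℂ), sum_inner]
      simp_rw [inner_sum, inner_smul_left, inner_smul_right, hv,
        L2.inner_indicatorConstLp_one_indicatorConstLp_one]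
      simp [mul_assoc]
    have hn : ‖∑ q ∈ Finset.Icc 1 Q, ((w q : ℝ) : ℂ) • v q‖ ≤ 9 * S Q := by
      apply le_of_sq_le_sq _ (by positivity)
      nlinarith
    have e : ∑ q ∈ Finset.Icc 1 Q, ((w q : ℝ) : ℂ) • (v q - ((4 * ψ q ^ 2 : ℝ) : ℂ) • o)
        = (∑ q ∈ Finset.Icc 1 Q, ((w q : ℝ) : ℂ) • v q) - ((4 * S Q : ℝ) : ℂ) • o := by
      simp_rw [smul_sub, Finset.sum_sub_distrib, smul_smul, ← Finset.sum_smul]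
      congr 2
      simp only [hS]
      push_cast
      rw [Finset.mul_sum]
      refine Finset.sum_congr rfl fun q _ => by ring
    simp only [hG]
    rw [e, norm_smul, Complex.norm_real, Real.norm_eq_abs, abs_of_pos (by positivity)]
    have h2 : ‖((4 * S Q : ℝ) : ℂ) • o‖ ≤ 4 * S Q := by
      rw [norm_smul, Complex.norm_real, Real.norm_eq_abs, abs_of_pos (by positivity)]
      nlinarith
    have h3 := (norm_sub_le (∑ q ∈ Finset.Icc 1 Q, ((w q : ℝ) : ℂ) • v q)
      (((4 * S Q : ℝ) : ℂ) • o))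
    rw [inv_mul_le_iff₀ hSp]
    linarith
  have hinv : Tendsto (fun Q => (S Q)⁻¹) atTop (𝓝 0) := tendsto_inv_atTop_zero.comp hdiv
  -- orthogonality
  have hvF : ∀ q (n : Fin 2 → ℤ), inner ℂ (v q) (ContinuousMap.toLp (E := ℂ) 2
      (volume : Measure (Fin 2 → UnitAddCircle)) ℂ (UnitAddTorus.mFourier n))
      = ∫ x in torE q g (ψ q), UnitAddTorus.mFourier n x := by
    intro q n
    rw [hv, L2.inner_indicatorConstLp_one]
    exact integral_congr_ae (ae_restrict_of_ae (ContinuousMap.coeFn_toLp _ _))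
  have hoF : ∀ (n : Fin 2 → ℤ), inner ℂ o (ContinuousMap.toLp (E := ℂ) 2
      (volume : Measure (Fin 2 → UnitAddCircle)) ℂ (UnitAddTorus.mFourier n))
      = ∫ x, UnitAddTorus.mFourier n x := by
    intro n
    rw [ho, L2.inner_indicatorConstLp_one, setIntegral_univ]
    exact integral_congr_ae (ContinuousMap.coeFn_toLp _ _)
  have huniv : ∀ q, torE q g 1 = Set.univ := by
    intro q
    ext x
    simp only [torE, torA, Set.mem_pi, Set.mem_univ, Set.mem_ofPred_eq, true_imp_iff, iff_true]
    intro i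
    refine (AddCircle.norm_le_half_period (p := 1) one_ne_zero).trans ?_
    norm_num
  have horth : ∀ n : Fin 2 → ℤ, ∃ q0 : ℕ, ∀ q, q0 < q →
      inner ℂ (v q - ((4 * ψ q ^ 2 : ℝ) : ℂ) • o) (ContinuousMap.toLp (E := ℂ) 2
      (volume : Measure (Fin 2 → UnitAddCircle)) ℂ (UnitAddTorus.mFourier n)) = 0 := by
    intro n
    by_cases hn : n = 0
    · subst hn
      refine ⟨0, fun q hq => ?_⟩
      rw [inner_sub_left, inner_smul_left, hvF, hoF, UnitAddTorus.mFourier_zero]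
      rw [Complex.conj_ofReal]
      simp [torE_vol q hq g (ψ q) (h0 q) (h1 q), tor_univ]
    · obtain ⟨i, hi⟩ := Function.ne_iff.mp hn
      refine ⟨(n i).natAbs, fun q hq => ?_⟩
      have hq' : |n i| < q := by rw [Int.abs_eq_natAbs]; exact_mod_cast hq
      rw [inner_sub_left, inner_smul_left, hvF, hoF, torE_fourier q g (ψ q) n i hi hq',
        ← setIntegral_univ, ← huniv q, torE_fourier q g 1 n i hi hq']
      simp
  have hweak := tor_weak G 13 hK _ tor_span (by
    rintro _ ⟨n, rfl⟩
    obtain ⟨q0, hq0⟩ := horth n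
    set e := ContinuousMap.toLp (E := ℂ) 2
      (volume : Measure (Fin 2 → UnitAddCircle)) ℂ (UnitAddTorus.mFourier n) with he
    have hlim : Tendsto (fun Q => (((S Q)⁻¹ : ℝ) : ℂ) *
        ∑ q ∈ Finset.Icc 1 q0, ((w q : ℝ) : ℂ) *
          inner ℂ (v q - ((4 * ψ q ^ 2 : ℝ) : ℂ) • o) e) atTop (𝓝 0) := by
      exact tor_lim _ hinv _
    refine hlim.congr' ?_
    filter_upwards [eventually_ge_atTop q0] with Q hQ
    simp only [hG]
    rw [inner_smul_left, sum_inner, Complex.conj_ofReal]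
    congr 1
    simp_rw [inner_smul_left, Complex.conj_ofReal]
    apply Finset.sum_subset (Finset.Icc_subset_Icc_right hQ)
    intro q hq hq2
    rw [hq0 q (by simp only [Finset.mem_Icc] at hq hq2; omega), mul_zero]) u
  -- evaluate against B
  have hval : ∀ᶠ Q in atTop, inner ℂ (G Q) u
      = (((S Q)⁻¹ * (∑ q ∈ Finset.Icc 1 Q, w q * volume.real (torE q g (ψ q) ∩ B))
        - 4 * volume.real B : ℝ) : ℂ) := by
    filter_upwards [hdiv.eventually_ge_atTop 1] with Q hQ
    change 1 ≤ S Q at hQ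
    have hSp : S Q ≠ 0 := by linarith
    simp only [hG]
    rw [inner_smul_left, sum_inner, Complex.conj_ofReal]
    simp_rw [inner_smul_left, inner_sub_left, inner_smul_left, Complex.conj_ofReal, hv, ho, hu,
      L2.inner_indicatorConstLp_one_indicatorConstLp_one, Set.univ_inter, mul_sub,
      Finset.sum_sub_distrib]
    have e : (∑ q ∈ Finset.Icc 1 Q, w q * (4 * ψ q ^ 2 * volume.real B))
        = S Q * (4 * volume.real B) := by
      simp only [hS]
      rw [Finset.sum_mul]
      exact Finset.sum_congr rfl fun q _ => by ring
    have e' : 4 * volume.real B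
        = (S Q)⁻¹ * ∑ q ∈ Finset.Icc 1 Q, w q * (4 * ψ q ^ 2 * volume.real B) := by
      rw [e]; field_simp
    rw [e']
    push_cast
    simp [mul_sub]
  have hle : ∀ Q, ∑ q ∈ Finset.Icc 1 Q, w q * volume.real (torE q g (ψ q) ∩ B)
      ≤ M * volume.real B := by
    intro Q
    have hint : ∀ q, Integrable (fun x => w q * (torE q g (ψ q)).indicator (fun _ => (1:ℝ)) x)
        (volume.restrict B) := fun q =>
      ((integrable_const (1:ℝ)).indicator (torE_meas _ _ _)).const_mul _
    have e : ∑ q ∈ Finset.Icc 1 Q, w q * volume.real (torE q g (ψ q) ∩ B)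
        = ∫ x in B, ∑ q ∈ Finset.Icc 1 Q,
          w q * (torE q g (ψ q)).indicator (fun _ => (1:ℝ)) x := by
      rw [integral_finsetSum _ (fun q _ => hint q)]
      refine Finset.sum_congr rfl fun q _ => ?_
      rw [integral_const_mul, integral_indicator_const _ (torE_meas _ _ _),
        measureReal_restrict_apply (torE_meas _ _ _)]
      simp
    rw [e]
    calc _ ≤ ∫ x in B, M := by
          apply setIntegral_mono_on (integrable_finsetSum _ (fun q _ => hint q))
            (integrable_const _) hB
          intro x hx
          exact hM x hx Q
      _ = _ := by rw [setIntegral_const, smul_eq_mul, mul_comm]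
  have hfin : Tendsto (fun Q => ‖inner ℂ (G Q) u‖ + (S Q)⁻¹ * (M * volume.real B)) atTop
      (𝓝 0) := by
    simpa using hweak.norm.add (hinv.mul_const (M * volume.real B))
  have hB0 : 4 * volume.real B ≤ 0 := by
    refine ge_of_tendsto hfin ?_
    filter_upwards [hval, hdiv.eventually_ge_atTop 1] with Q hQ hQ1
    change 1 ≤ S Q at hQ1
    rw [hQ, Complex.norm_real, Real.norm_eq_abs]
    have h2 : (S Q)⁻¹ * (∑ q ∈ Finset.Icc 1 Q, w q * volume.real (torE q g (ψ q) ∩ B))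
        ≤ (S Q)⁻¹ * (M * volume.real B) :=
      mul_le_mul_of_nonneg_left (hle Q) (by positivity)
    have h3 := neg_abs_le ((S Q)⁻¹ * (∑ q ∈ Finset.Icc 1 Q,
      w q * volume.real (torE q g (ψ q) ∩ B)) - 4 * volume.real B)
    linarith
  have hB1 : volume.real B = 0 := le_antisymm (by linarith) measureReal_nonneg
  exact (measureReal_eq_zero_iff).mp hB1

lemma tor_limsup (g : Fin 2 → UnitAddCircle) (ψ : ℕ → ℝ) (h0 : ∀ q, 0 ≤ ψ q)
    (h1 : ∀ q, ψ q ≤ 1 / 2)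
    (hdiv : Tendsto (fun Q : ℕ => ∑ q ∈ Finset.Icc 1 Q,
      ((Nat.totient q : ℝ) / q) ^ 2 * ψ q ^ 2) atTop atTop) :
    volume {x : Fin 2 → UnitAddCircle | ¬ {q : ℕ | 0 < q ∧ x ∈ torE q g (ψ q)}.Infinite} = 0 := by
  set w : ℕ → ℝ := fun q => ((Nat.totient q : ℝ) / q) ^ 2 with hw
  have hw0 : ∀ q, 0 ≤ w q := fun q => by simp only [hw]; positivity
  set B : ℕ → Set (Fin 2 → UnitAddCircle) := fun M => {x | ∀ Q : ℕ,
      ∑ q ∈ Finset.Icc 1 Q, w q * (torE q g (ψ q)).indicator (fun _ => (1:ℝ)) x ≤ M} with hB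
  have hBm : ∀ M, MeasurableSet (B M) := by
    intro M
    have : B M = ⋂ Q : ℕ, {x | ∑ q ∈ Finset.Icc 1 Q,
        w q * (torE q g (ψ q)).indicator (fun _ => (1:ℝ)) x ≤ M} := by
      ext x; simp [hB]
    rw [this]
    refine MeasurableSet.iInter fun Q => ?_
    refine measurableSet_le ?_ measurable_const
    exact Finset.measurable_sum _ fun q _ =>
      ((measurable_const.indicator (torE_meas _ _ _)).const_mul _)
  refine measure_mono_null (t := ⋃ M, B M) ?_ (measure_iUnion_null fun M =>
    tor_null g ψ h0 h1 w (fun _ => rfl) hdiv (B M) (hBm M) M fun x hx => hx)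
  intro x hx
  have hfin : {q : ℕ | 0 < q ∧ x ∈ torE q g (ψ q)}.Finite := Set.not_infinite.mp hx
  obtain ⟨M, hM⟩ := exists_nat_ge (∑ q ∈ hfin.toFinset, w q)
  refine Set.mem_iUnion.mpr ⟨M, fun Q => le_trans ?_ hM⟩
  calc ∑ q ∈ Finset.Icc 1 Q, w q * (torE q g (ψ q)).indicator (fun _ => (1:ℝ)) x
      = ∑ q ∈ (Finset.Icc 1 Q).filter (fun q => q ∈ hfin.toFinset), w q := by
        rw [Finset.sum_filter]
        refine Finset.sum_congr rfl fun q hq => ?_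
        have hq1 : 0 < q := (Finset.mem_Icc.mp hq).1
        by_cases h : x ∈ torE q g (ψ q) <;> simp [h, hq1]
    _ ≤ _ := Finset.sum_le_sum_of_subset_of_nonneg
        (fun q hq => (Finset.mem_filter.mp hq).2) (fun q _ _ => hw0 q)

theorem stmt5 (γ₁ γ₂ : ℝ) (ψ : ℕ → ℝ) (hψ0 : ∀ q, 0 ≤ ψ q)
    (hdiv : Tendsto (fun Q : ℕ =>
      ∑ q ∈ Finset.Icc 1 Q, (ψ q * Nat.totient q / q) ^ 2) atTop atTop) :
    volume {x : ℝ × ℝ | x.1 ∈ Set.Icc (0:ℝ) 1 ∧ x.2 ∈ Set.Icc (0:ℝ) 1 ∧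
      {q : ℕ | 0 < q ∧ max (dnint (q * x.1 - γ₁)) (dnint (q * x.2 - γ₂)) ≤ ψ q}.Infinite}
      = 1 := by
  have hdn : ∀ y : ℝ, dnint y = ‖(y : UnitAddCircle)‖ := fun y => (UnitAddCircle.norm_eq).symm
  have hdh : ∀ y : ℝ, dnint y ≤ 1 / 2 := fun y => abs_sub_round y
  -- it suffices to handle almost every point
  suffices hae : ∀ᵐ x ∂((volume : Measure ℝ).restrict (Set.Ioc 0 (0 + 1))).prod
      ((volume : Measure ℝ).restrict (Set.Ioc 0 (0 + 1))),
      {q : ℕ | 0 < q ∧ max (dnint (q * x.1 - γ₁)) (dnint (q * x.2 - γ₂)) ≤ ψ q}.Infinite by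
    rw [Measure.prod_restrict, ae_restrict_iff' (measurableSet_Ioc.prod measurableSet_Ioc)] at hae
    apply le_antisymm
    · calc _ ≤ volume (Set.Icc (0:ℝ) 1 ×ˢ Set.Icc (0:ℝ) 1) :=
            measure_mono fun x hx => ⟨hx.1, hx.2.1⟩
        _ = 1 := by rw [Measure.volume_eq_prod, Measure.prod_prod]; simp
    · calc (1 : ENNReal) = volume (Set.Ioc (0:ℝ) (0 + 1) ×ˢ Set.Ioc (0:ℝ) (0 + 1)) := by
            rw [Measure.volume_eq_prod, Measure.prod_prod]; simp
        _ ≤ _ := by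
            apply measure_mono_ae
            filter_upwards [hae] with x hx hx2
            have h3 := hx hx2
            obtain ⟨⟨a1, a2⟩, ⟨b1, b2⟩⟩ := hx2
            exact ⟨⟨a1.le, by linarith⟩, ⟨b1.le, by linarith⟩, h3⟩
  by_cases hbig : {q : ℕ | 1 / 2 ≤ ψ q}.Infinite
  · refine Eventually.of_forall fun x => ?_
    refine (hbig.sdiff (Set.finite_singleton 0)).mono fun q hq => ?_
    have hq0 : q ≠ 0 := by simpa using hq.2
    exact ⟨Nat.pos_of_ne_zero hq0, max_le ((hdh _).trans hq.1) ((hdh _).trans hq.1)⟩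
  have hfin : {q : ℕ | 1 / 2 ≤ ψ q}.Finite := Set.not_infinite.mp hbig
  set ψ' : ℕ → ℝ := fun q => min (ψ q) (1 / 2) with hψ'
  set g : Fin 2 → UnitAddCircle := ![(γ₁ : UnitAddCircle), (γ₂ : UnitAddCircle)] with hg
  have hdiv' : Tendsto (fun Q : ℕ => ∑ q ∈ Finset.Icc 1 Q,
      ((Nat.totient q : ℝ) / q) ^ 2 * ψ' q ^ 2) atTop atTop := by
    set C := ∑ q ∈ hfin.toFinset, (ψ q * Nat.totient q / q) ^ 2 with hC
    refine tendsto_atTop_mono ?_ (tendsto_atTop_add_const_right _ (-C) hdiv)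
    intro Q
    have : ∑ q ∈ Finset.Icc 1 Q, (ψ q * Nat.totient q / q) ^ 2
        ≤ ∑ q ∈ Finset.Icc 1 Q, (((Nat.totient q : ℝ) / q) ^ 2 * ψ' q ^ 2
          + if q ∈ hfin.toFinset then (ψ q * Nat.totient q / q) ^ 2 else 0) := by
      refine Finset.sum_le_sum fun q _ => ?_
      by_cases h : 1 / 2 ≤ ψ q
      · rw [if_pos (by simpa using h)]
        have : 0 ≤ ((Nat.totient q : ℝ) / q) ^ 2 * ψ' q ^ 2 := by positivity
        linarith
      · rw [if_neg (by simpa using h)]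
        have : ψ' q = ψ q := min_eq_left (not_le.mp h).le
        rw [this]
        apply le_of_eq; ring
    rw [Finset.sum_add_distrib, ← Finset.sum_filter] at this
    have h2 : ∑ q ∈ (Finset.Icc 1 Q).filter (fun q => q ∈ hfin.toFinset),
        (ψ q * Nat.totient q / q) ^ 2 ≤ C :=
      Finset.sum_le_sum_of_subset_of_nonneg
        (fun q hq => (Finset.mem_filter.mp hq).2) (fun q _ _ => sq_nonneg _)
    linarith
  have hnull := tor_limsup g ψ' (fun q => le_min (hψ0 q) (by norm_num))
    (fun q => min_le_right _ _) hdiv'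
  have hmp : MeasurePreserving (fun x : ℝ × ℝ =>
      (MeasurableEquiv.finTwoArrow (α := UnitAddCircle)).symm
        ((x.1 : UnitAddCircle), (x.2 : UnitAddCircle)))
      (((volume : Measure ℝ).restrict (Set.Ioc 0 (0 + 1))).prod
      ((volume : Measure ℝ).restrict (Set.Ioc 0 (0 + 1)))) volume :=
    ((volume_preserving_finTwoArrow UnitAddCircle).symm _).comp
      ((UnitAddCircle.measurePreserving_mk 0).prod (UnitAddCircle.measurePreserving_mk 0))
  have hae : ∀ᵐ x : Fin 2 → UnitAddCircle,
      {q : ℕ | 0 < q ∧ x ∈ torE q g (ψ' q)}.Infinite := hnull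
  filter_upwards [hmp.quasiMeasurePreserving.ae hae] with x hx
  refine hx.mono fun q hq => ⟨hq.1, ?_⟩
  have hq2 := hq.2
  simp only [torE, torA, Set.mem_pi, Set.mem_univ, true_imp_iff, Set.mem_ofPred_eq,
    Fin.forall_fin_two] at hq2
  have k1 : dnint (q * x.1 - γ₁) ≤ ψ' q := by
    rw [hdn, AddCircle.coe_sub, ← nsmul_eq_mul, AddCircle.coe_nsmul]
    exact hq2.1
  have k2 : dnint (q * x.2 - γ₂) ≤ ψ' q := by
    rw [hdn, AddCircle.coe_sub, ← nsmul_eq_mul, AddCircle.coe_nsmul]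
    exact hq2.2
  exact max_le (k1.trans (min_le_left _ _)) (k2.trans (min_le_left _ _))
end

section
/- Let ε > 0, let γ be a real number, and let ψ be an approximation function with ∑_q ψ(q)/d(q)^{1+ε} = ∞, where d(q) is the number of positive divisors of q. Then the set of x ∈ [0,1] such that ‖qx − γ‖ ≤ ψ(q) for infinitely many positive integers q has Lebesgue measure one. -/
open MeasureTheory Filter Real

/-- The approximation set on the circle. -/
def approxSet (ψ : ℕ → ℝ) (γ : ℝ) (q : ℕ) : Set UnitAddCircle :=
  {x | ‖q • x - (γ : UnitAddCircle)‖ ≤ ψ q}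

lemma approxSet_meas (ψ : ℕ → ℝ) (γ : ℝ) (q : ℕ) : MeasurableSet (approxSet ψ γ q) := by
  apply IsClosed.measurableSet
  apply isClosed_le
  · fun_prop
  · exact continuous_const

lemma approxSet_vol (ψ : ℕ → ℝ) (γ : ℝ) (q : ℕ) (hq : 1 ≤ q) (h0 : 0 ≤ ψ q)
    (h1 : ψ q ≤ 1 / 2) : volume.real (approxSet ψ γ q) = 2 * ψ q := by
  have hmp : MeasurePreserving (fun y : UnitAddCircle => q • y) volume volume := by
    rcases Nat.lt_or_ge 1 q with h | h
    · exact (AddCircle.ergodic_nsmul h).toMeasurePreserving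
    · obtain rfl : q = 1 := by omega
      simp only [one_smul]
      exact MeasurePreserving.id (volume : Measure UnitAddCircle)
  have hset : approxSet ψ γ q =
      (fun y : UnitAddCircle => q • y) ⁻¹' Metric.closedBall (γ : UnitAddCircle) (ψ q) := by
    ext x
    simp [approxSet, dist_eq_norm]
  rw [hset, measureReal_def, hmp.measure_preimage Metric.isClosed_closedBall.nullMeasurableSet,
    AddCircle.volume_closedBall, min_eq_right (by linarith), ENNReal.toReal_ofReal (by linarith)]

lemma count_lemma (q r : ℕ) (hr : 1 ≤ r) (s a : ℝ) (ha : 0 ≤ a) :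
    (((Finset.range r).filter (fun n : ℕ => |(q * (n / r : ℝ) + s) -
      round (q * (n / r : ℝ) + s)| ≤ a)).card : ℝ) ≤ 2 * a * r + Nat.gcd q r := by
  set g := Nat.gcd q r with hg
  have hgpos : 0 < g := Nat.gcd_pos_of_pos_right _ hr
  obtain ⟨q', hq'⟩ : g ∣ q := Nat.gcd_dvd_left _ _
  obtain ⟨r', hr'⟩ : g ∣ r := Nat.gcd_dvd_right _ _
  have hr'pos : 0 < r' := by
    rcases Nat.eq_zero_or_pos r' with h | h
    · subst h; omega
    · exact h
  have hcop : Nat.Coprime q' r' := by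
    have : g * Nat.gcd q' r' = g * 1 := by
      rw [← Nat.gcd_mul_left, ← hq', ← hr', mul_one]
    exact Nat.eq_of_mul_eq_mul_left hgpos this
  set m : ℕ → ℤ := fun n => round (q * (n / r : ℝ) + s) with hm
  set k : ℕ → ℤ := fun n => (q' : ℤ) * n - m n * r' with hk
  have hR : (0:ℝ) < r' := by exact_mod_cast hr'pos
  have hG : (0:ℝ) < g := by exact_mod_cast hgpos
  set T : Finset (ℤ × ℕ) :=
    (Finset.Icc ⌈(-s * r' - a * r' : ℝ)⌉ ⌊(-s * r' + a * r' : ℝ)⌋) ×ˢ Finset.range g with hT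
  have hcard : ((Finset.range r).filter (fun n : ℕ => |(q * (n / r : ℝ) + s) -
      round (q * (n / r : ℝ) + s)| ≤ a)).card ≤ T.card := by
    apply Finset.card_le_card_of_injOn (fun n => (k n, n / r'))
    · intro n hn
      simp only [Finset.coe_filter, Finset.mem_range, Set.mem_ofPred_eq] at hn
      obtain ⟨hn1, hn2⟩ := hn
      have hkey : (k n : ℝ) + s * r' = ((q * (n / r : ℝ) + s) - m n) * r' := by
        simp only [hk]
        rw [hq', hr']
        push_cast
        field_simp
        ring
      rw [abs_le] at hn2
      simp only [hT, Finset.coe_product, Set.mem_prod, Finset.mem_coe, Finset.mem_Icc,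
        Finset.mem_range, Int.ceil_le, Int.le_floor]
      have e1 := mul_le_mul_of_nonneg_right hn2.1 hR.le
      have e2 := mul_le_mul_of_nonneg_right hn2.2 hR.le
      simp only [hm] at hkey
      refine ⟨⟨by linarith, by linarith⟩, ?_⟩
      rw [Nat.div_lt_iff_lt_mul hr'pos, ← hr']
      exact hn1
    · intro n _ n' _ h
      simp only [Prod.mk.injEq, hk] at h
      obtain ⟨h1, h2⟩ := h
      have h3 : (r' : ℤ) ∣ (q' : ℤ) * ((n : ℤ) - n') := ⟨m n - m n', by linarith⟩
      have h4 : (r' : ℤ) ∣ ((n : ℤ) - n') :=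
        (Nat.isCoprime_iff_coprime.mpr hcop.symm).dvd_of_dvd_mul_left h3
      have h5 : n' ≡ n [MOD r'] := (Nat.modEq_iff_dvd).mpr h4
      have h6 : n' % r' = n % r' := h5
      rw [← Nat.div_add_mod n r', ← Nat.div_add_mod n' r', h2, h6]
  have hTc : (T.card : ℝ) ≤ (2 * a * r' + 1) * g := by
    rw [hT, Finset.card_product, Finset.card_range, Int.card_Icc]
    push_cast
    apply mul_le_mul_of_nonneg_right _ hG.le
    have hb1 := Int.floor_le (-s * r' + a * r' : ℝ)
    have hb2 := Int.le_ceil (-s * r' - a * r' : ℝ)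
    have hpos : 0 ≤ a * r' := by positivity
    have : (((⌊(-s * r' + a * r' : ℝ)⌋ + 1 - ⌈(-s * r' - a * r' : ℝ)⌉).toNat : ℤ) : ℝ)
        ≤ 2 * a * r' + 1 := by
      rw [Int.toNat_eq_max]
      push_cast
      apply max_le
      · linarith
      · linarith
    exact_mod_cast this
  calc _ ≤ (T.card : ℝ) := by exact_mod_cast hcard
    _ ≤ _ := hTc
    _ = 2 * a * r + g := by
      have : (r : ℝ) = g * r' := by exact_mod_cast hr'
      rw [this]; ring

lemma overlap (ψ : ℕ → ℝ) (γ : ℝ) (q r : ℕ) (hr : 1 ≤ r) (h0 : 0 ≤ ψ q)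
    (hr0 : 0 ≤ ψ r) (hr1 : ψ r ≤ 1 / 2) :
    volume.real (approxSet ψ γ q ∩ approxSet ψ γ r) ≤
      (2 * ψ q) * (2 * ψ r) + 2 * ψ r * (Nat.gcd q r / r : ℝ) := by
  classical
  have hR : (0:ℝ) < r := by exact_mod_cast hr
  set c : ℕ → UnitAddCircle := fun n => (((n / r : ℝ) : ℝ) : UnitAddCircle) with hc
  set Aq := approxSet ψ γ q
  set Ar := approxSet ψ γ r with hAr
  have hAqm : MeasurableSet Aq := approxSet_meas ψ γ q
  have hArm : MeasurableSet Ar := approxSet_meas ψ γ r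
  have hrc : ∀ n, r • c n = 0 := by
    intro n
    rw [hc]
    simp only
    rw [← AddCircle.coe_nsmul, nsmul_eq_mul, mul_div_cancel₀ _ hR.ne', AddCircle.coe_eq_zero_iff]
    exact ⟨n, by simp⟩
  set S : ℕ → Set UnitAddCircle := fun n => (fun x => x + c n) ⁻¹' (Aq ∩ Ar) with hS
  have hSm : ∀ n, MeasurableSet (S n) := fun n =>
    (measurable_add_const (c n)) (hAqm.inter hArm)
  have hSv : ∀ n, volume.real (S n) = volume.real (Aq ∩ Ar) := by
    intro n
    simp only [measureReal_def, hS]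
    rw [measure_preimage_add_right]
  have hsum : (r : ℝ) * volume.real (Aq ∩ Ar) =
      ∫ x, ∑ n ∈ Finset.range r, (S n).indicator (1 : UnitAddCircle → ℝ) x := by
    rw [integral_finsetSum]
    · simp only [integral_indicator_one (hSm _), hSv]
      simp
    · intro n _
      exact (integrable_const (1:ℝ)).indicator (hSm n)
  have hpt : ∀ x : UnitAddCircle,
      ∑ n ∈ Finset.range r, (S n).indicator (1 : UnitAddCircle → ℝ) x ≤
        Ar.indicator (fun _ => 2 * ψ q * r + Nat.gcd q r) x := by
    intro x
    have hmemr : ∀ n, x + c n ∈ Ar ↔ x ∈ Ar := by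
      intro n
      simp only [hAr, approxSet, Set.mem_ofPred_eq, smul_add, hrc, add_zero]
    by_cases hx : x ∈ Ar
    · rw [Set.indicator_of_mem hx]
      induction x using QuotientAddGroup.induction_on with
      | H y =>
      refine le_trans (le_of_eq ?_) (count_lemma q r hr (q * y - γ) (ψ q) h0)
      rw [Finset.card_filter]
      push_cast
      apply Finset.sum_congr rfl
      intro n _
      have : ((y : UnitAddCircle) ∈ S n) ↔ |(q * (n / r : ℝ) + (q * y - γ)) -
          round (q * (n / r : ℝ) + (q * y - γ))| ≤ ψ q := by
        rw [← UnitAddCircle.norm_eq]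
        have e : ((q * (n / r : ℝ) + (q * y - γ) : ℝ) : UnitAddCircle) =
            q • ((y : UnitAddCircle) + c n) - (γ : UnitAddCircle) := by
          simp only [hc]
          rw [← AddCircle.coe_add, ← AddCircle.coe_nsmul, ← AddCircle.coe_sub]
          congr 1
          rw [nsmul_eq_mul]; ring
        rw [e]
        simp only [hS, Set.mem_preimage, Set.mem_inter_iff]
        have := (hmemr n).mpr hx
        exact ⟨fun h => h.1, fun h => ⟨h, this⟩⟩
      by_cases h : ((y : UnitAddCircle) ∈ S n)
      · rw [Set.indicator_of_mem h, if_pos (this.mp h)]; rfl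
      · rw [Set.indicator_of_notMem h, if_neg (fun h' => h (this.mpr h'))]
    · rw [Set.indicator_of_notMem hx]
      apply le_of_eq
      apply Finset.sum_eq_zero
      intro n _
      apply Set.indicator_of_notMem
      intro h
      exact hx ((hmemr n).mp h.2)
  have hle : (r : ℝ) * volume.real (Aq ∩ Ar) ≤ 2 * ψ r * (2 * ψ q * r + Nat.gcd q r) := by
    rw [hsum, ← approxSet_vol ψ γ r hr hr0 hr1, ← smul_eq_mul (volume.real _),
      ← integral_indicator_const _ hArm]
    apply integral_mono
    · apply integrable_finsetSum
      intro n _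
      exact (integrable_const (1:ℝ)).indicator (hSm n)
    · exact (integrable_const _).indicator hArm
    · exact hpt
  have : (2 * ψ q) * (2 * ψ r) + 2 * ψ r * (Nat.gcd q r / r : ℝ) =
      (2 * ψ r * (2 * ψ q * r + Nat.gcd q r)) / r := by
    field_simp
  rw [this, le_div_iff₀ hR]
  linarith

lemma gcd_sum (r : ℕ) (hr : 1 ≤ r) :
    ∑ q ∈ Finset.Icc 1 r, Nat.gcd q r ≤ r * r.divisors.card := by
  calc ∑ q ∈ Finset.Icc 1 r, Nat.gcd q r
      ≤ ∑ q ∈ Finset.Icc 1 r, ∑ e ∈ r.divisors, (if e ∣ q then e else 0) := by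
        apply Finset.sum_le_sum
        intro q _
        have hmem : Nat.gcd q r ∈ r.divisors :=
          Nat.mem_divisors.mpr ⟨Nat.gcd_dvd_right _ _, by omega⟩
        have := Finset.single_le_sum (f := fun e => if e ∣ q then e else 0)
          (fun i _ => Nat.zero_le _) hmem
        simpa [Nat.gcd_dvd_left] using this
    _ = ∑ e ∈ r.divisors, ∑ q ∈ Finset.Icc 1 r, (if e ∣ q then e else 0) := Finset.sum_comm
    _ = ∑ e ∈ r.divisors, r := by
        apply Finset.sum_congr rfl
        intro e he
        have hd := (Nat.mem_divisors.mp he).1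
        rw [← Finset.sum_filter, Finset.sum_const, smul_eq_mul]
        have : (Finset.filter (fun q => e ∣ q) (Finset.Icc 1 r)).card = r / e := by
          rw [← Nat.Ioc_filter_dvd_card_eq_div]
          rfl
        rw [this, Nat.div_mul_cancel hd]
    _ = r * r.divisors.card := by simp [mul_comm]

lemma var_bound {Ω : Type*} [MeasurableSpace Ω] (μ : Measure Ω) [IsProbabilityMeasure μ]
    (B : Finset ℕ) (A : ℕ → Set Ω) (hA : ∀ q, MeasurableSet (A q)) (m E : ℝ)
    (hm : m = ∑ q ∈ B, μ.real (A q))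
    (hE : ∑ q ∈ B, ∑ r ∈ B, μ.real (A q ∩ A r) ≤ m ^ 2 + E) :
    μ.real (⋃ q ∈ B, A q)ᶜ * m ^ 2 ≤ E := by
  set f : Ω → ℝ := fun x => ∑ q ∈ B, (A q).indicator (1 : Ω → ℝ) x with hf
  have hint : ∀ s : Set Ω, MeasurableSet s → Integrable (s.indicator (1 : Ω → ℝ)) μ :=
    fun s hs => (integrable_const (1:ℝ)).indicator hs
  have hfi : Integrable f μ := integrable_finsetSum _ fun q _ => hint _ (hA q)
  have hf1 : ∫ x, f x ∂μ = m := by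
    rw [hf, integral_finsetSum _ fun q _ => hint _ (hA q), hm]
    simp only [integral_indicator_one (hA _)]
  have hsq : (fun x => f x ^ 2) =
      fun x => ∑ q ∈ B, ∑ r ∈ B, (A q ∩ A r).indicator (1 : Ω → ℝ) x := by
    funext x
    simp only [hf, sq, Finset.sum_mul_sum]
    apply Finset.sum_congr rfl; intro q _
    apply Finset.sum_congr rfl; intro r _
    rw [Set.inter_indicator_one]; rfl
  have hf2i : Integrable (fun x => f x ^ 2) μ := by
    rw [hsq]
    exact integrable_finsetSum _ fun q _ => integrable_finsetSum _ fun r _ =>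
      hint _ ((hA q).inter (hA r))
  have hf2 : ∫ x, f x ^ 2 ∂μ = ∑ q ∈ B, ∑ r ∈ B, μ.real (A q ∩ A r) := by
    rw [hsq, integral_finsetSum _ fun q _ => integrable_finsetSum _ fun r _ =>
      hint _ ((hA q).inter (hA r))]
    apply Finset.sum_congr rfl; intro q _
    rw [integral_finsetSum _ fun r _ => hint _ ((hA q).inter (hA r))]
    apply Finset.sum_congr rfl; intro r _
    rw [integral_indicator_one ((hA q).inter (hA r))]
  have hU : MeasurableSet (⋃ q ∈ B, A q)ᶜ :=
    (Finset.measurableSet_biUnion _ fun q _ => hA q).compl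
  have hvar : ∫ x, (f x ^ 2 - 2 * m * f x + m ^ 2) ∂μ =
      (∑ q ∈ B, ∑ r ∈ B, μ.real (A q ∩ A r)) - m ^ 2 := by
    have hs : Integrable (fun x => f x ^ 2 - 2 * m * f x) μ := hf2i.sub (hfi.const_mul _)
    rw [integral_add hs (integrable_const _),
      integral_sub hf2i (hfi.const_mul _), hf2, integral_const_mul, hf1]
    simp
    ring
  have hle : μ.real (⋃ q ∈ B, A q)ᶜ * m ^ 2 ≤ ∫ x, (f x ^ 2 - 2 * m * f x + m ^ 2) ∂μ := by
    rw [← smul_eq_mul, ← integral_indicator_const _ hU]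
    apply integral_mono
    · exact (integrable_const _).indicator hU
    · exact (hf2i.sub (hfi.const_mul _)).add (integrable_const _)
    · intro x
      by_cases hx : x ∈ (⋃ q ∈ B, A q)ᶜ
      · have hfx : f x = 0 := by
          simp only [hf]
          apply Finset.sum_eq_zero
          intro q hq
          apply Set.indicator_of_notMem
          intro h
          exact hx (Set.mem_biUnion hq h)
        simp only [Set.indicator_of_mem hx, hfx]
        norm_num
      · simp only [Set.indicator_of_notMem hx]
        nlinarith [sq_nonneg (f x - m)]
  linarith

lemma block_bound (ψ : ℕ → ℝ) (γ : ℝ) (hψ0 : ∀ q, 0 ≤ ψ q) (B : Finset ℕ) (D : ℕ)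
    (hB1 : ∀ q ∈ B, 1 ≤ q) (hBh : ∀ q ∈ B, ψ q ≤ 1 / 2)
    (hBd : ∀ q ∈ B, q.divisors.card ≤ D) (hpos : 0 < ∑ q ∈ B, ψ q) :
    volume.real (⋃ q ∈ B, approxSet ψ γ q)ᶜ ≤ D / ∑ q ∈ B, ψ q := by
  haveI : IsProbabilityMeasure (volume : Measure UnitAddCircle) := ⟨by simp⟩
  set S := ∑ q ∈ B, ψ q with hS
  have hm : 2 * S = ∑ q ∈ B, volume.real (approxSet ψ γ q) := by
    rw [hS, Finset.mul_sum]
    apply Finset.sum_congr rfl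
    intro q hq
    rw [approxSet_vol ψ γ q (hB1 q hq) (hψ0 q) (hBh q hq)]
  -- error term
  set G : ℕ → ℕ → ℝ := fun q r => if q ≤ r then 2 * ψ r * (Nat.gcd q r / r : ℝ) else 0 with hG
  have hG0 : ∀ q r, 0 ≤ G q r := by
    intro q r
    simp only [hG]
    split_ifs
    · have := hψ0 r
      positivity
    · exact le_rfl
  have hov : ∀ q ∈ B, ∀ r ∈ B, volume.real (approxSet ψ γ q ∩ approxSet ψ γ r) ≤
      (2 * ψ q) * (2 * ψ r) + (G q r + G r q) := by
    intro q hq r hr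
    rcases le_total q r with h | h
    · have h1 := overlap ψ γ q r (hB1 r hr) (hψ0 q) (hψ0 r) (hBh r hr)
      have h2 : G q r = 2 * ψ r * (Nat.gcd q r / r : ℝ) := by simp only [hG, if_pos h]
      have h3 := hG0 r q
      linarith
    · have h1 := overlap ψ γ r q (hB1 q hq) (hψ0 r) (hψ0 q) (hBh q hq)
      have h2 : G r q = 2 * ψ q * (Nat.gcd r q / q : ℝ) := by simp only [hG, if_pos h]
      have h3 := hG0 q r
      rw [Set.inter_comm]
      linarith
  have hGs : ∑ r ∈ B, ∑ q ∈ B, G q r ≤ 2 * S * D := by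
    rw [hS, Finset.mul_sum, Finset.sum_mul]
    apply Finset.sum_le_sum
    intro r hr
    have hr1 := hB1 r hr
    have hR : (0:ℝ) < r := by exact_mod_cast hr1
    have hg : (∑ q ∈ Finset.Icc 1 r, (Nat.gcd q r : ℝ)) ≤ r * D := by
      have h1 := (gcd_sum r hr1).trans (Nat.mul_le_mul_left r (hBd r hr))
      exact_mod_cast h1
    calc ∑ q ∈ B, G q r = ∑ q ∈ B.filter (· ≤ r), 2 * ψ r * (Nat.gcd q r / r : ℝ) := by
          rw [Finset.sum_filter]
      _ ≤ ∑ q ∈ Finset.Icc 1 r, 2 * ψ r * (Nat.gcd q r / r : ℝ) := by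
          apply Finset.sum_le_sum_of_subset_of_nonneg
          · intro q hq
            rw [Finset.mem_filter] at hq
            exact Finset.mem_Icc.mpr ⟨hB1 q hq.1, hq.2⟩
          · intro q _ _
            have := hψ0 r
            positivity
      _ = 2 * ψ r * ((∑ q ∈ Finset.Icc 1 r, (Nat.gcd q r : ℝ)) / r) := by
          rw [← Finset.mul_sum, Finset.sum_div]
      _ ≤ 2 * ψ r * D := by
          apply mul_le_mul_of_nonneg_left _ (by have := hψ0 r; positivity)
          rw [div_le_iff₀ hR]
          linarith
  have hE : ∑ q ∈ B, ∑ r ∈ B, volume.real (approxSet ψ γ q ∩ approxSet ψ γ r) ≤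
      (2 * S) ^ 2 + 4 * S * D := by
    calc _ ≤ ∑ q ∈ B, ∑ r ∈ B, ((2 * ψ q) * (2 * ψ r) + (G q r + G r q)) :=
          Finset.sum_le_sum fun q hq => Finset.sum_le_sum fun r hr => hov q hq r hr
      _ = (2 * S) ^ 2 + (∑ q ∈ B, ∑ r ∈ B, G q r + ∑ q ∈ B, ∑ r ∈ B, G r q) := by
          simp only [Finset.sum_add_distrib]
          congr 1
          rw [← Finset.sum_mul_sum, ← Finset.mul_sum, sq]
      _ ≤ _ := by
          rw [Finset.sum_comm (f := fun q r => G q r)]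
          linarith
  have := var_bound volume B (approxSet ψ γ) (approxSet_meas ψ γ) (2 * S) (4 * S * D) hm hE
  rw [le_div_iff₀ hpos]
  nlinarith

lemma exists_block (ε : ℝ) (hε : 0 < ε) (ψ : ℕ → ℝ) (hψ0 : ∀ q, 0 ≤ ψ q)
    (hdiv : Tendsto (fun Q : ℕ =>
      ∑ q ∈ Finset.Icc 1 Q, ψ q / ((q.divisors.card : ℝ) ^ ((1:ℝ) + ε))) atTop atTop)
    (N : ℕ) (M : ℝ) (hM : 0 < M) :
    ∃ (B : Finset ℕ) (D : ℕ), 1 ≤ D ∧ (∀ q ∈ B, N < q) ∧ (∀ q ∈ B, q.divisors.card ≤ D) ∧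
      M * D < ∑ q ∈ B, ψ q := by
  by_contra! hcon
  set F : ℕ → ℝ := fun q => ψ q / ((q.divisors.card : ℝ) ^ ((1:ℝ) + ε)) with hF
  set C0 := ∑ q ∈ Finset.Icc 1 N, F q with hC0
  set ρ : ℝ := (2:ℝ) ^ (-ε) with hρ
  have hρ0 : 0 ≤ ρ := by positivity
  have hρ1 : ρ < 1 := by
    rw [hρ]; exact Real.rpow_lt_one_of_one_lt_of_neg (by norm_num) (by linarith)
  have hbound : ∀ Q, ∑ q ∈ Finset.Icc 1 Q, F q ≤ C0 + 2 * M * (1 - ρ)⁻¹ := by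
    intro Q
    have hF0 : ∀ q, 0 ≤ F q := fun q => by
      have := hψ0 q
      simp only [hF]; positivity
    set L : ℕ → ℕ := fun q => Nat.log 2 q.divisors.card with hL
    have h1 : ∑ q ∈ Finset.Icc 1 Q, F q ≤ C0 + ∑ q ∈ Finset.Ioc N Q, F q := by
      rw [hC0, ← Finset.sum_union]
      · apply Finset.sum_le_sum_of_subset_of_nonneg
        · intro q hq
          simp only [Finset.mem_union, Finset.mem_Icc, Finset.mem_Ioc] at *
          omega
        · intro q _ _; exact hF0 q
      · rw [Finset.disjoint_left]
        intro q hq hq'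
        simp only [Finset.mem_Icc, Finset.mem_Ioc] at *
        omega
    have h2 : ∑ q ∈ Finset.Ioc N Q, F q =
        ∑ j ∈ (Finset.Ioc N Q).image L, ∑ q ∈ (Finset.Ioc N Q).filter (fun q => L q = j), F q :=
      (Finset.sum_fiberwise_of_maps_to (fun q hq => Finset.mem_image_of_mem L hq) _).symm
    have h3 : ∀ j, ∑ q ∈ (Finset.Ioc N Q).filter (fun q => L q = j), F q ≤ 2 * M * ρ ^ j := by
      intro j
      set B := (Finset.Ioc N Q).filter (fun q => L q = j) with hB
      have hBm : ∀ q ∈ B, N < q ∧ L q = j := fun q hq => by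
        rw [hB, Finset.mem_filter, Finset.mem_Ioc] at hq
        exact ⟨hq.1.1, hq.2⟩
      have hc := hcon B (2 ^ (j + 1)) Nat.one_le_two_pow (fun q hq => (hBm q hq).1)
        (fun q hq => by
          have := Nat.lt_pow_succ_log_self (b := 2) (by norm_num) q.divisors.card
          rw [← (hBm q hq).2]
          exact this.le)
      have hterm : ∀ q ∈ B, F q ≤ ψ q * ((2:ℝ) ^ (-(j:ℝ)) * ρ ^ j) := by
        intro q hq
        have hdp : q.divisors.card ≠ 0 := by
          have := (hBm q hq).1
          rw [Ne, Finset.card_eq_zero, Nat.divisors_eq_empty]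
          omega
        have hle : 2 ^ j ≤ q.divisors.card := by
          have := Nat.pow_log_le_self 2 hdp
          rw [← (hBm q hq).2]
          exact this
        have hle' : (2:ℝ) ^ (j:ℝ) ≤ (q.divisors.card : ℝ) := by
          rw [Real.rpow_natCast]; exact_mod_cast hle
        have hle2 : ((2:ℝ) ^ (j:ℝ)) ^ (1 + ε) ≤ (q.divisors.card : ℝ) ^ (1 + ε) :=
          Real.rpow_le_rpow (by positivity) hle' (by linarith)
        have heq : ((2:ℝ) ^ (-(j:ℝ)) * ρ ^ j) = (((2:ℝ) ^ (j:ℝ)) ^ (1 + ε))⁻¹ := by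
          rw [hρ, ← Real.rpow_natCast ((2:ℝ) ^ (-ε)) j, ← Real.rpow_mul (by norm_num),
            ← Real.rpow_mul (by norm_num), ← Real.rpow_add (by norm_num),
            ← Real.rpow_neg (by norm_num)]
          congr 1; ring
        simp only [hF]
        rw [heq, div_eq_mul_inv]
        apply mul_le_mul_of_nonneg_left _ (hψ0 q)
        exact inv_anti₀ (by positivity) hle2
      calc ∑ q ∈ B, F q ≤ ∑ q ∈ B, ψ q * ((2:ℝ) ^ (-(j:ℝ)) * ρ ^ j) := Finset.sum_le_sum hterm
        _ = (∑ q ∈ B, ψ q) * ((2:ℝ) ^ (-(j:ℝ)) * ρ ^ j) := by rw [Finset.sum_mul]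
        _ ≤ (M * (2 ^ (j + 1) : ℕ)) * ((2:ℝ) ^ (-(j:ℝ)) * ρ ^ j) :=
            mul_le_mul_of_nonneg_right hc (by positivity)
        _ = 2 * M * ρ ^ j := by
            rw [Real.rpow_neg (by norm_num), Real.rpow_natCast]
            push_cast
            rw [pow_succ]
            field_simp
    have h4 : ∑ j ∈ (Finset.Ioc N Q).image L, 2 * M * ρ ^ j ≤ 2 * M * (1 - ρ)⁻¹ := by
      rw [← Finset.mul_sum]
      apply mul_le_mul_of_nonneg_left _ (by positivity)
      rw [← tsum_geometric_of_lt_one hρ0 hρ1]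
      exact (summable_geometric_of_lt_one hρ0 hρ1).sum_le_tsum _ fun i _ => by positivity
    have h5 := Finset.sum_le_sum (s := (Finset.Ioc N Q).image L) fun j _ => h3 j
    linarith
  obtain ⟨Q, hQ⟩ := (hdiv.eventually (eventually_gt_atTop (C0 + 2 * M * (1 - ρ)⁻¹))).exists
  exact absurd (hbound Q) (not_le.mpr hQ)

lemma tail_null (ε : ℝ) (hε : 0 < ε) (γ : ℝ) (ψ : ℕ → ℝ) (hψ0 : ∀ q, 0 ≤ ψ q)
    (hdiv : Tendsto (fun Q : ℕ =>
      ∑ q ∈ Finset.Icc 1 Q, ψ q / ((q.divisors.card : ℝ) ^ ((1:ℝ) + ε))) atTop atTop)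
    (N : ℕ) (hN : ∀ q, N < q → ψ q ≤ 1 / 2) :
    volume (⋃ q ∈ {q : ℕ | N < q}, approxSet ψ γ q)ᶜ = 0 := by
  rw [← measureReal_eq_zero_iff]
  apply le_antisymm _ measureReal_nonneg
  apply le_of_forall_pos_le_add
  intro δ hδ
  rw [zero_add]
  obtain ⟨B, D, hD, hBN, hBD, hBM⟩ := exists_block ε hε ψ hψ0 hdiv N δ⁻¹ (by positivity)
  have hD' : (1:ℝ) ≤ D := by exact_mod_cast hD
  have hpos : 0 < ∑ q ∈ B, ψ q := lt_of_le_of_lt (by positivity) hBM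
  have h := block_bound ψ γ hψ0 B D (fun q hq => by have := hBN q hq; omega)
    (fun q hq => hN q (hBN q hq)) hBD hpos
  calc _ ≤ volume.real (⋃ q ∈ B, approxSet ψ γ q)ᶜ := by
        refine measureReal_mono ?_ (measure_ne_top _ _)
        apply Set.compl_subset_compl.mpr
        exact Set.biUnion_subset_biUnion_left fun q hq => hBN q hq
    _ ≤ _ := h
    _ ≤ δ := by
        rw [div_le_iff₀ hpos]
        rw [inv_mul_lt_iff₀ hδ] at hBM
        exact hBM.le

theorem stmt6 (ε : ℝ) (hε : 0 < ε) (γ : ℝ) (ψ : ℕ → ℝ) (hψ0 : ∀ q, 0 ≤ ψ q)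
    (hdiv : Tendsto (fun Q : ℕ =>
      ∑ q ∈ Finset.Icc 1 Q, ψ q / ((q.divisors.card : ℝ) ^ ((1:ℝ) + ε))) atTop atTop) :
    volume {x ∈ Set.Icc (0:ℝ) 1 |
      {q : ℕ | 0 < q ∧ dnint (q * x - γ) ≤ ψ q}.Infinite} = 1 := by
  by_cases hinf : ∀ N : ℕ, ∃ q, N < q ∧ 1 / 2 < ψ q
  · have : {x ∈ Set.Icc (0:ℝ) 1 | {q : ℕ | 0 < q ∧ dnint (q * x - γ) ≤ ψ q}.Infinite} =
        Set.Icc (0:ℝ) 1 := by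
      apply Set.Subset.antisymm (Set.sep_subset _ _)
      intro x hx
      refine ⟨hx, Set.infinite_of_forall_exists_gt fun N => ?_⟩
      obtain ⟨q, hq, hψ⟩ := hinf N
      exact ⟨q, ⟨by omega, (abs_sub_round _).trans hψ.le⟩, hq⟩
    rw [this]
    simp
  · push Not at hinf
    obtain ⟨N0, hN0⟩ := hinf
    have hae : ∀ᵐ x : UnitAddCircle, ∀ N : ℕ, x ∈ ⋃ q ∈ {q : ℕ | N0 + N < q}, approxSet ψ γ q := by
      rw [ae_all_iff]
      intro N
      exact tail_null ε hε γ ψ hψ0 hdiv (N0 + N) fun q hq => hN0 q (by omega)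
    have hae2 := (UnitAddCircle.measurePreserving_mk 0).quasiMeasurePreserving.ae hae
    rw [zero_add, ae_restrict_iff' measurableSet_Ioc] at hae2
    have hIoc : volume (Set.Ioc (0:ℝ) 1) = 1 := by simp
    have hIcc : volume (Set.Icc (0:ℝ) 1) = 1 := by simp
    apply le_antisymm
    · rw [← hIcc]
      exact measure_mono (Set.sep_subset _ _)
    · rw [← hIoc]
      apply measure_mono_ae
      filter_upwards [hae2] with x hx hxI
      refine ⟨Set.Ioc_subset_Icc_self hxI, Set.infinite_of_forall_exists_gt fun N => ?_⟩
      have h := hx hxI N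
      simp only [Set.mem_iUnion, Set.mem_ofPred_eq] at h
      obtain ⟨q, hq, hmem⟩ := h
      refine ⟨q, ⟨by omega, ?_⟩, by omega⟩
      have e : ((q * x - γ : ℝ) : UnitAddCircle) =
          q • (x : UnitAddCircle) - (γ : UnitAddCircle) := by
        rw [← AddCircle.coe_nsmul, ← AddCircle.coe_sub, nsmul_eq_mul]
      rw [dnint, ← UnitAddCircle.norm_eq, e]
      exact hmem
end

section
/- Let H > 2 be an integer, let ψ be an approximation function with 0 < ψ(q) < 1/2 for all q, and let γ be an irrational number. For integers 1 ≤ q′ < q with Δ(q,q′) < H·gcd(q,q′), one has |A_q ∩ A_{q′}| ≤ 2(2H+1) · min{ψ(q)/q, ψ(q′)/q′} · gcd(q,q′) if ‖γ(q − q′)/gcd(q,q′)‖ ≤ Δ(q,q′)/gcd(q,q′), and |A_q ∩ A_{q′}| = 0 otherwise. -/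
open MeasureTheory Filter Real

/-- `A_q = {x ∈ [0,1] : ‖qx - γ‖ < ψ(q)}`. -/
noncomputable def Aset (ψ : ℕ → ℝ) (γ : ℝ) (q : ℕ) : Set ℝ :=
  {x ∈ Set.Icc (0:ℝ) 1 | dnint (q * x - γ) < ψ q}

/-- `Δ(q,q') = qψ(q') + q'ψ(q)`. -/
noncomputable def Δfun (ψ : ℕ → ℝ) (q q' : ℕ) : ℝ := q * ψ q' + q' * ψ q


lemma aux_fold (c a : ℝ) (S I : Set ℝ) (hI : MeasurableSet I)
    (h : ∀ x ∈ S, ∃ k : ℤ, x + k * c ∈ I) :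
    volume (S ∩ Set.Ioc a (a + c)) ≤ volume I := by
  have h1 : S ∩ Set.Ioc a (a + c) ⊆
      ⋃ k : ℤ, (fun x => x + k * c) ⁻¹' (I ∩ Set.Ioc (a + k • c) (a + (k + 1) • c)) := by
    rintro x ⟨hx, hx1, hx2⟩
    obtain ⟨k, hk⟩ := h x hx
    refine Set.mem_iUnion.2 ⟨k, hk, ?_, ?_⟩
    · simp only [zsmul_eq_mul]; linarith
    · simp only [zsmul_eq_mul]; push_cast; linarith
  calc volume (S ∩ Set.Ioc a (a + c)) ≤ _ := measure_mono h1
    _ ≤ ∑' k : ℤ, volume ((fun x => x + k * c) ⁻¹' (I ∩ Set.Ioc (a + k • c) (a + (k + 1) • c))) :=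
        measure_iUnion_le _
    _ = ∑' k : ℤ, volume (I ∩ Set.Ioc (a + k • c) (a + (k + 1) • c)) := by
        congr 1; ext k; exact measure_preimage_add_right _ _ _
    _ = volume (⋃ k : ℤ, (I ∩ Set.Ioc (a + k • c) (a + (k + 1) • c))) := by
        rw [measure_iUnion]
        · intro i j hij
          exact (Set.pairwise_disjoint_Ioc_add_zsmul a c hij).mono
            Set.inter_subset_right Set.inter_subset_right
        · intro i; exact hI.inter measurableSet_Ioc
    _ ≤ volume I := measure_mono (Set.iUnion_subset fun _ => Set.inter_subset_left)

lemma aux_vol (q g s : ℝ) (hq : 0 < q) :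
    volume {x : ℝ | |q * x - g| < s} = ENNReal.ofReal (2 * (s / q)) ∧
    MeasurableSet {x : ℝ | |q * x - g| < s} := by
  have : {x : ℝ | |q * x - g| < s} = Set.Ioo ((g - s) / q) ((g + s) / q) := by
    ext x
    simp only [Set.mem_ofPred_eq, abs_lt, Set.mem_Ioo, div_lt_iff₀ hq, lt_div_iff₀ hq]
    constructor <;> rintro ⟨h1, h2⟩ <;> constructor <;> linarith
  rw [this]
  refine ⟨?_, measurableSet_Ioo⟩
  rw [Real.volume_Ioo]; congr 1; field_simp; ring

lemma aux_unit (d : ℕ) (hd : 0 < d) (S : Set ℝ) (B : ENNReal)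
    (h : ∀ a : ℝ, volume (S ∩ Set.Ioc a (a + 1 / d)) ≤ B) :
    volume (S ∩ Set.Icc 0 1) ≤ d * B := by
  have hd' : (0 : ℝ) < d := by exact_mod_cast hd
  have h1 : S ∩ Set.Icc 0 1 ⊆
      {0} ∪ ⋃ j ∈ Finset.range d, (S ∩ Set.Ioc ((j : ℝ) / d) ((j : ℝ) / d + 1 / d)) := by
    rintro x ⟨hx, h0, h1⟩
    rcases h0.eq_or_lt with rfl | h0
    · left; rfl
    right
    have hp : 0 < x * d := by positivity
    have hc : 0 < ⌈x * d⌉₊ := Nat.ceil_pos.2 hp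
    have hle : ⌈x * d⌉₊ ≤ d := Nat.ceil_le.2 (by nlinarith)
    obtain ⟨j, hj⟩ : ∃ j, ⌈x * d⌉₊ = j + 1 := ⟨_, (Nat.succ_pred_eq_of_pos hc).symm⟩
    have hl := Nat.ceil_lt_add_one hp.le
    have hr := Nat.le_ceil (x * d)
    rw [hj] at hl hr hle
    push_cast at hl hr
    simp only [Set.mem_iUnion, Finset.mem_range]
    refine ⟨j, by omega, hx, ?_, ?_⟩
    · rw [div_lt_iff₀ hd']; linarith
    · rw [← add_div, le_div_iff₀ hd']; exact hr
  calc volume (S ∩ Set.Icc 0 1) ≤ _ := measure_mono h1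
    _ ≤ volume {(0:ℝ)} + volume (⋃ j ∈ Finset.range d, (S ∩ Set.Ioc ((j : ℝ) / d) ((j : ℝ) / d + 1 / d))) :=
        measure_union_le _ _
    _ ≤ 0 + ∑ j ∈ Finset.range d, volume (S ∩ Set.Ioc ((j : ℝ) / d) ((j : ℝ) / d + 1 / d)) := by
        gcongr
        · simp
        · exact measure_biUnion_finset_le _ _
    _ ≤ 0 + ∑ j ∈ Finset.range d, B := by
        gcongr; exact h _
    _ = d * B := by simp

lemma aux_key (q q' p p' g s s' x : ℝ) (hq : 0 < q) (hq' : 0 < q')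
    (h : |q * x - g - p| < s) (h' : |q' * x - g - p'| < s') :
    |g * (q - q') + (q * p' - q' * p)| < q * s' + q' * s := by
  rw [abs_lt] at *
  obtain ⟨a, b⟩ := h
  obtain ⟨a', b'⟩ := h'
  constructor
  · nlinarith [mul_lt_mul_of_pos_left a hq', mul_lt_mul_of_pos_left b' hq]
  · nlinarith [mul_lt_mul_of_pos_left b hq', mul_lt_mul_of_pos_left a' hq]

/-- points whose witnesses have a given cross difference -/
def Em (γ s s' : ℝ) (q q' : ℕ) (d m : ℤ) : Set ℝ :=
  {x | ∃ p p' : ℤ, q * p' - q' * p = d * m ∧ |q * x - γ - p| < s ∧ |q' * x - γ - p'| < s'}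

lemma aux_Em (γ s s' : ℝ) (q q' : ℕ) (hq : 0 < q) (hq' : 0 < q') (m : ℤ) (a : ℝ) :
    volume (Em γ s s' q q' (Nat.gcd q q' : ℕ) m ∩ Set.Ioc a (a + 1 / (Nat.gcd q q' : ℕ))) ≤
      ENNReal.ofReal (2 * min (s / q) (s' / q')) := by
  set d := Nat.gcd q q' with hd
  have hdpos : 0 < d := Nat.gcd_pos_of_pos_left _ hq
  obtain hE | ⟨x0, p0, p0', h0, -, -⟩ := (Em γ s s' q q' d m).eq_empty_or_nonempty
  · simp [hE]
  obtain ⟨u, u', hco, hu, hu'⟩ := Nat.exists_coprime q q'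
  rw [← hd] at hu hu'
  have hqr : (0 : ℝ) < q := by exact_mod_cast hq
  have hqr' : (0 : ℝ) < q' := by exact_mod_cast hq'
  have hdr : (d : ℝ) ≠ 0 := by positivity
  have hur : (q : ℝ) = u * d := by rw [hu]; push_cast; ring
  have hur' : (q' : ℝ) = u' * d := by rw [hu']; push_cast; ring
  have hupos : 0 < u := by rcases Nat.eq_zero_or_pos u with h | h; · simp [h] at hu; omega
                           · exact h
  have key : ∀ x ∈ Em γ s s' q q' d m, ∃ k : ℤ,
      |q * (x + k * (1 / d)) - (γ + p0)| < s ∧ |q' * (x + k * (1 / d)) - (γ + p0')| < s' := by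
    rintro x ⟨p, p', h, hx, hx'⟩
    have e1 : (u : ℤ) * (p0' - p') = u' * (p0 - p) := by
      have hdz : (d : ℤ) ≠ 0 := by exact_mod_cast hdpos.ne'
      have e : (q : ℤ) = u * d := by rw [hu]; push_cast; ring
      have e' : (q' : ℤ) = u' * d := by rw [hu']; push_cast; ring
      rw [e, e'] at h h0
      apply mul_left_cancel₀ hdz
      linear_combination h0 - h
    have hdvd : (u : ℤ) ∣ p0 - p := by
      have : IsCoprime (u : ℤ) u' := Nat.isCoprime_iff_coprime.2 hco
      exact this.dvd_of_dvd_mul_left ⟨_, e1.symm⟩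
    obtain ⟨k, hk⟩ := hdvd
    have hk' : p0' - p' = u' * k := by
      have : (u : ℤ) ≠ 0 := by exact_mod_cast hupos.ne'
      apply mul_left_cancel₀ this
      rw [e1, hk]; ring
    have hkr : (p0 : ℝ) - p = u * k := by exact_mod_cast hk
    have hkr' : (p0' : ℝ) - p' = u' * k := by exact_mod_cast hk'
    refine ⟨k, ?_, ?_⟩
    · convert hx using 2
      have : (q : ℝ) * (k * (1 / d)) = u * k := by rw [hur]; field_simp
      linear_combination this - hkr
    · convert hx' using 2
      have : (q' : ℝ) * (k * (1 / d)) = u' * k := by rw [hur']; field_simp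
      linear_combination this - hkr'
  rcases min_choice (s / q : ℝ) (s' / q') with hm | hm <;> rw [hm]
  · obtain ⟨hv, hM⟩ := aux_vol q (γ + p0) s hqr
    rw [← hv]
    exact aux_fold _ _ _ _ hM fun x hx => (key x hx).imp fun k hk => hk.1
  · obtain ⟨hv, hM⟩ := aux_vol q' (γ + p0') s' hqr'
    rw [← hv]
    exact aux_fold _ _ _ _ hM fun x hx => (key x hx).imp fun k hk => hk.2

lemma aux_mem (ψ : ℕ → ℝ) (γ : ℝ) (q q' : ℕ) (hq : 0 < q) (hq' : 0 < q') (x : ℝ)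
    (hx : x ∈ Aset ψ γ q ∩ Aset ψ γ q') :
    ∃ m : ℤ, x ∈ Em γ (ψ q) (ψ q') q q' (Nat.gcd q q' : ℕ) m ∧
      |γ * ((q : ℝ) - q') / (Nat.gcd q q' : ℝ) + m| < Δfun ψ q q' / (Nat.gcd q q' : ℝ) := by
  obtain ⟨⟨-, h⟩, ⟨-, h'⟩⟩ := hx
  unfold dnint at h h'
  set p := round (q * x - γ)
  set p' := round (q' * x - γ)
  have hdpos : 0 < Nat.gcd q q' := Nat.gcd_pos_of_pos_left _ hq
  have hdr : (0 : ℝ) < Nat.gcd q q' := by exact_mod_cast hdpos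
  have h1 : ((Nat.gcd q q' : ℕ) : ℤ) ∣ q * p' - q' * p :=
    dvd_sub (Dvd.dvd.mul_right (by exact_mod_cast Nat.gcd_dvd_left q q') _)
      (Dvd.dvd.mul_right (by exact_mod_cast Nat.gcd_dvd_right q q') _)
  obtain ⟨m, hm⟩ := h1
  refine ⟨m, ⟨p, p', hm, h, h'⟩, ?_⟩
  have hk := aux_key q q' p p' γ (ψ q) (ψ q') x (by exact_mod_cast hq) (by exact_mod_cast hq') h h'
  have hmr : (q : ℝ) * p' - q' * p = Nat.gcd q q' * m := by exact_mod_cast hm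
  rw [hmr] at hk
  have e : γ * ((q : ℝ) - q') / (Nat.gcd q q' : ℝ) + m =
      (γ * ((q : ℝ) - q') + Nat.gcd q q' * m) / (Nat.gcd q q' : ℝ) := by
    field_simp
  rw [e, abs_div, abs_of_pos hdr]
  exact div_lt_div_of_pos_right hk hdr

theorem stmt7 (H : ℕ) (hH : 2 < H)
    (ψ : ℕ → ℝ) (hψpos : ∀ q, 1 ≤ q → 0 < ψ q) (hψhalf : ∀ q, 1 ≤ q → ψ q < 1/2)
    (γ : ℝ) (hγ : Irrational γ)
    (q q' : ℕ) (hq' : 1 ≤ q') (hq'q : q' < q)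
    (hΔ : Δfun ψ q q' < H * Nat.gcd q q') :
    (dnint (γ * ((q : ℝ) - q') / (Nat.gcd q q' : ℝ)) ≤ Δfun ψ q q' / (Nat.gcd q q' : ℝ) →
      volume (Aset ψ γ q ∩ Aset ψ γ q') ≤
        ENNReal.ofReal (2 * (2 * H + 1) * min (ψ q / q) (ψ q' / q') * Nat.gcd q q')) ∧
    (Δfun ψ q q' / (Nat.gcd q q' : ℝ) < dnint (γ * ((q : ℝ) - q') / (Nat.gcd q q' : ℝ)) →
      volume (Aset ψ γ q ∩ Aset ψ γ q') = 0) := by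
  have hq : 0 < q := by omega
  have hdpos : 0 < Nat.gcd q q' := Nat.gcd_pos_of_pos_left _ hq
  have hdr : (0 : ℝ) < Nat.gcd q q' := by exact_mod_cast hdpos
  constructor
  · intro _
    set β := γ * ((q : ℝ) - q') / (Nat.gcd q q' : ℝ) with hβ
    have hsub : Aset ψ γ q ∩ Aset ψ γ q' ⊆ ⋃ m ∈ Finset.Icc (-⌊β⌋ - H) (-⌊β⌋ + H),
        (Em γ (ψ q) (ψ q') q q' (Nat.gcd q q' : ℕ) m ∩ Set.Icc 0 1) := by
      intro x hx
      obtain ⟨m, hm, hb⟩ := aux_mem ψ γ q q' hq hq' x hx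
      have hH' : Δfun ψ q q' / (Nat.gcd q q' : ℝ) < H := by rwa [div_lt_iff₀ hdr]
      have hb2 := hb.trans hH'
      rw [abs_lt, ← hβ] at hb2
      obtain ⟨b1, b2⟩ := hb2
      have f1 := Int.floor_le β
      have f2 := Int.lt_floor_add_one β
      simp only [Set.mem_iUnion, Finset.mem_Icc]
      refine ⟨m, ⟨?_, ?_⟩, hm, hx.1.1⟩
      · have : (-⌊β⌋ - H - 1 : ℤ) < m := by
          have : ((-⌊β⌋ - H - 1 : ℤ) : ℝ) < m := by push_cast; linarith
          exact_mod_cast this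
        omega
      · have : ((m : ℤ) : ℝ) ≤ ((-⌊β⌋ + H : ℤ) : ℝ) := by push_cast; linarith
        exact_mod_cast this
    calc volume (Aset ψ γ q ∩ Aset ψ γ q') ≤ _ := measure_mono hsub
      _ ≤ ∑ m ∈ Finset.Icc (-⌊β⌋ - H) (-⌊β⌋ + H),
          volume (Em γ (ψ q) (ψ q') q q' (Nat.gcd q q' : ℕ) m ∩ Set.Icc 0 1) :=
          measure_biUnion_finset_le _ _
      _ ≤ ∑ m ∈ Finset.Icc (-⌊β⌋ - H) (-⌊β⌋ + H),
          (Nat.gcd q q' : ENNReal) * ENNReal.ofReal (2 * min (ψ q / q) (ψ q' / q')) := by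
          gcongr with m _
          exact aux_unit _ hdpos _ _ fun a => aux_Em γ _ _ q q' hq hq' m a
      _ = _ := by
          have hc : (-⌊β⌋ + (H : ℤ) + 1 - (-⌊β⌋ - H)).toNat = 2 * H + 1 := by omega
          rw [Finset.sum_const, Int.card_Icc, hc, nsmul_eq_mul, ← ENNReal.ofReal_natCast (2 * H + 1),
            ← ENNReal.ofReal_natCast (Nat.gcd q q'), ← ENNReal.ofReal_mul (by positivity),
            ← ENNReal.ofReal_mul (by positivity)]
          congr 1
          push_cast
          ring
  · intro h
    have : Aset ψ γ q ∩ Aset ψ γ q' = ∅ := by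
      rw [Set.eq_empty_iff_forall_notMem]
      intro x hx
      obtain ⟨m, -, hb⟩ := aux_mem ψ γ q q' hq hq' x hx
      have h2 := round_le (γ * ((q : ℝ) - q') / (Nat.gcd q q' : ℝ)) (-m)
      push_cast at h2
      rw [sub_neg_eq_add] at h2
      unfold dnint at h
      linarith
    rw [this]; simp
end

section
/- There is an absolute constant C₀ > 1 with the following property. For every integer H > 2, every approximation function ψ with 0 < ψ(q) < 1/2 for all q, every irrational number γ, and all integers 1 ≤ q′ < q with Δ(q,q′) ≥ H·gcd(q,q′), one has |A_q ∩ A_{q′}| ≤ 4ψ(q)ψ(q′)·(1 + C₀/(2H)). -/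
open MeasureTheory Filter Real

noncomputable def hfun (p : ℝ) (x : ℝ) : ℝ := Set.indicator {x | dnint x < p} (fun _ => (1:ℝ)) x

lemma dnint_add_int (x : ℝ) (n : ℤ) : dnint (x + n) = dnint x := by
  unfold dnint
  rw [round_add_intCast]; push_cast; congr 1; ring

lemma hfun_add_int (p x : ℝ) (n : ℤ) : hfun p (x + n) = hfun p x := by
  simp only [hfun, Set.indicator, Set.mem_ofPred_eq, dnint_add_int]

lemma hfun_eq (p x : ℝ) : hfun p x = if dnint x < p then 1 else 0 := by
  simp only [hfun, Set.indicator, Set.mem_ofPred_eq]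

lemma hfun_nonneg (p x : ℝ) : 0 ≤ hfun p x := by
  rw [hfun_eq]; split_ifs <;> norm_num

lemma hfun_le (p x : ℝ) : hfun p x ≤ 1 := by
  rw [hfun_eq]; split_ifs <;> norm_num

lemma dnint_meas : Measurable dnint := by
  unfold dnint
  have : Measurable (fun x : ℝ => ((round x : ℤ) : ℝ)) := by
    simp only [round_eq]
    fun_prop
  fun_prop

lemma hfun_meas (p : ℝ) : Measurable (hfun p) := by
  unfold hfun
  exact measurable_const.indicator (measurableSet_lt dnint_meas measurable_const)

lemma ii_of_bdd (f : ℝ → ℝ) (hf : Measurable f) (C : ℝ) (hC : ∀ x, |f x| ≤ C) (a b : ℝ) :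
    IntervalIntegrable f volume a b := by
  refine (intervalIntegrable_const (c := C)).mono_fun hf.aestronglyMeasurable ?_
  refine Eventually.of_forall fun x => ?_
  simp only [Real.norm_eq_abs]
  exact (hC x).trans (le_abs_self C)

lemma hfun_abs (p x : ℝ) : |hfun p x| ≤ 1 := by
  rw [abs_of_nonneg (hfun_nonneg _ _)]; exact hfun_le _ _

lemma hfun_int (p : ℝ) (hp : 0 < p) (hp2 : p < 1/2) :
    ∫ x in (-(1/2:ℝ))..(-(1/2) + 1), hfun p x ≤ 2 * p := by
  have h1 : (-(1/2:ℝ)) ≤ -(1/2) + 1 := by norm_num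
  have : ∫ x in (-(1/2:ℝ))..(-(1/2) + 1), hfun p x ≤
      ∫ x in (-(1/2:ℝ))..(-(1/2) + 1), Set.indicator (Set.Icc (-p) p) (fun _ => (1:ℝ)) x := by
    apply intervalIntegral.integral_mono_on h1
    · exact ii_of_bdd _ (hfun_meas p) 1 (hfun_abs p) _ _
    · refine ii_of_bdd _ (measurable_const.indicator measurableSet_Icc) 1 (fun x => ?_) _ _
      simp only [Set.indicator]; split_ifs <;> norm_num
    · intro x hx
      rw [hfun_eq]
      split_ifs with h
      · have h0 : round x = 0 := by
          unfold dnint at h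
          rw [abs_lt] at h
          have a1 : ((round x : ℤ):ℝ) < 1 := by linarith [hx.2]
          have a2 : (-1:ℝ) < ((round x : ℤ):ℝ) := by linarith [hx.1]
          have a1' : round x < 1 := by exact_mod_cast a1
          have a2' : -1 < round x := by exact_mod_cast a2
          omega
        unfold dnint at h
        rw [h0] at h
        simp only [Int.cast_zero, sub_zero, abs_lt] at h
        rw [Set.indicator_of_mem]
        exact ⟨h.1.le, h.2.le⟩
      · apply Set.indicator_nonneg; intros; norm_num
  refine this.trans ?_
  rw [intervalIntegral.integral_of_le h1, integral_indicator measurableSet_Icc,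
    Measure.restrict_restrict measurableSet_Icc]
  simp only [integral_const, smul_eq_mul, mul_one]
  have : (volume.restrict (Set.Icc (-p) p ∩ Set.Ioc (-(1/2:ℝ)) (-(1/2) + 1))).real Set.univ
      ≤ volume.real (Set.Icc (-p) p) := by
    rw [measureReal_restrict_apply MeasurableSet.univ]
    refine measureReal_mono (by intro x hx; exact hx.2.1) (by simp)
  refine this.trans ?_
  rw [Real.volume_real_Icc]
  rw [max_eq_left (by linarith)]; linarith

lemma comp_int (p : ℝ) (hp : 0 < p) (hp2 : p < 1/2) (γ : ℝ) (q : ℕ) (hq : 1 ≤ q) :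
    ∫ x in (0:ℝ)..1, hfun p (q * x - γ) ≤ 2 * p := by
  have hq0 : (q:ℝ) ≠ 0 := by positivity
  have hper : Function.Periodic (hfun p) 1 := fun x => by
    have := hfun_add_int p x 1
    simpa using this
  rw [intervalIntegral.integral_comp_mul_sub (hfun p) hq0 γ]
  have h2 := hper.intervalIntegral_add_zsmul_eq (q:ℤ) (q * 0 - γ)
    (fun a b => ii_of_bdd _ (hfun_meas p) 1 (hfun_abs p) _ _)
  have e : (q:ℝ) * 0 - γ + (q:ℤ) • (1:ℝ) = q * 1 - γ := by simp; ring
  rw [e] at h2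
  rw [h2, hper.intervalIntegral_add_eq _ (-(1/2))]
  simp only [natCast_zsmul, nsmul_eq_mul, smul_eq_mul]
  rw [← mul_assoc, inv_mul_cancel₀ hq0, one_mul]
  exact hfun_int p hp hp2

lemma count_int (s : Finset ℤ) (y r : ℝ) (hr : 0 < r) (hs : ∀ n ∈ s, |y + n| < r) :
    (s.card : ℝ) ≤ 2 * r + 1 := by
  rcases s.eq_empty_or_nonempty with h | h
  · subst h; simp; linarith
  · have hm := hs _ (s.min'_mem h)
    have hM := hs _ (s.max'_mem h)
    have hsub : s ⊆ Finset.Icc (s.min' h) (s.max' h) := fun x hx =>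
      Finset.mem_Icc.2 ⟨s.min'_le x hx, s.le_max' x hx⟩
    have hc := Finset.card_le_card hsub
    rw [Int.card_Icc] at hc
    have hle : s.min' h ≤ s.max' h := s.min'_le _ (s.max'_mem h)
    have hc' : (s.card : ℤ) ≤ s.max' h + 1 - s.min' h := by omega
    have hc'' : (s.card : ℝ) ≤ s.max' h + 1 - s.min' h := by exact_mod_cast hc'
    rw [abs_lt] at hm hM
    linarith

lemma sum_bound (p : ℝ) (hp : 0 < p) (a b : ℕ) (hb : 1 ≤ b) (hab : Nat.Coprime a b) (u : ℝ) :
    ∑ j ∈ Finset.range b, hfun p (u + a * j / b) ≤ 2 * (b * p) + 1 := by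
  have hb0 : (0:ℝ) < b := by positivity
  simp only [hfun_eq]
  rw [Finset.sum_boole]
  set s := (Finset.range b).filter (fun j : ℕ => dnint (u + a * j / b) < p) with hs
  let φ : ℕ → ℤ := fun j => a * j - b * round (u + a * j / b)
  have hinj : Set.InjOn φ s := by
    intro i hi j hj hij
    have hi' : i < b := by simp [hs] at hi; exact hi.1
    have hj' : j < b := by simp [hs] at hj; exact hj.1
    simp only [φ] at hij
    have h1 : (b:ℤ) ∣ a * ((i:ℤ) - j) :=
      ⟨round (u + a * i / b) - round (u + a * j / b), by linarith⟩
    have h2 : (b:ℤ) ∣ (i:ℤ) - j :=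
      IsCoprime.dvd_of_dvd_mul_left (Nat.isCoprime_iff_coprime.2 hab.symm) h1
    have h3 : (i:ℤ) - j = 0 := by
      apply Int.eq_zero_of_abs_lt_dvd h2
      rw [abs_lt]; omega
    omega
  rw [← Finset.card_image_of_injOn hinj]
  apply count_int _ (b * u) _ (by positivity)
  intro n hn
  obtain ⟨j, hj, rfl⟩ := Finset.mem_image.1 hn
  have hj' : dnint (u + a * j / b) < p := (Finset.mem_filter.1 hj).2
  have : (b:ℝ) * u + (φ j : ℤ) = b * (u + a * j / b - round (u + a * j / b)) := by
    simp only [φ]; push_cast; field_simp; ring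
  rw [this, abs_mul, abs_of_pos hb0]
  exact mul_lt_mul_of_pos_left hj' hb0

lemma key (p p' : ℝ) (hp : 0 < p) (hp' : 0 < p') (hp2 : p' < 1/2) (γ : ℝ)
    (q q' : ℕ) (hq : 1 ≤ q) (hq' : 1 ≤ q') :
    ∫ x in (0:ℝ)..1, hfun p (q * x - γ) * hfun p' (q' * x - γ) ≤
      2 * p' * (2 * p + Nat.gcd q q' / q') := by
  obtain ⟨a, b, hab, ha, hb⟩ := Nat.exists_coprime q q'
  set d := Nat.gcd q q' with hd
  have hdpos : 0 < d := Nat.gcd_pos_of_pos_left _ hq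
  have hbpos : 0 < b := by
    rcases Nat.eq_zero_or_pos b with h | h
    · simp [h] at hb; omega
    · exact h
  have hd0 : (0:ℝ) < d := by exact_mod_cast hdpos
  have hb0 : (0:ℝ) < b := by exact_mod_cast hbpos
  have hqr : (q:ℝ) = a * d := by exact_mod_cast ha
  have hqr' : (q':ℝ) = b * d := by exact_mod_cast hb
  set F : ℝ → ℝ := fun x => hfun p (q * x - γ) with hF
  set G : ℝ → ℝ := fun x => hfun p' (q' * x - γ) with hG
  have mF : Measurable F := (hfun_meas p).comp (by fun_prop)
  have mG : Measurable G := (hfun_meas p').comp (by fun_prop)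
  have pF : Function.Periodic F 1 := fun x => by
    have := hfun_add_int p (q * x - γ) q
    simp only [hF]; rw [← this]; congr 1; push_cast; ring
  have pG : Function.Periodic G 1 := fun x => by
    have := hfun_add_int p' (q' * x - γ) q'
    simp only [hG]; rw [← this]; congr 1; push_cast; ring
  have pFG : Function.Periodic (fun x => F x * G x) 1 := pF.mul pG
  have abs2 : ∀ x y, |hfun p x * hfun p' y| ≤ 1 := fun x y => by
    rw [abs_mul]
    exact mul_le_one₀ (hfun_abs _ _) (abs_nonneg _) (hfun_abs _ _)
  have shift : ∀ j : ℕ, ∫ x in (0:ℝ)..1, F x * G x =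
      ∫ x in (0:ℝ)..1, hfun p ((q * x - γ) + a * j / b) * G x := by
    intro j
    have h1 := pFG.intervalIntegral_add_eq 0 (0 + (j:ℝ)/q')
    have h2 := intervalIntegral.integral_comp_add_right (a := 0) (b := 1)
      (fun x => F x * G x) ((j:ℝ)/q')
    have e : (0:ℝ) + (j:ℝ)/q' + 1 = 1 + j/q' := by ring
    rw [e, ← h2, zero_add] at h1
    rw [h1]
    congr 1; ext x
    congr 1
    · simp only [hF]; congr 1; rw [hqr, hqr']; field_simp <;> ring
    · have := hfun_add_int p' (q' * x - γ) j
      simp only [hG]; rw [← this]; congr 1; rw [hqr']; push_cast; field_simp; ring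
  have hsum : (b:ℝ) * ∫ x in (0:ℝ)..1, F x * G x =
      ∫ x in (0:ℝ)..1, ∑ j ∈ Finset.range b, hfun p ((q * x - γ) + a * j / b) * G x := by
    rw [intervalIntegral.integral_finsetSum]
    · rw [← Finset.sum_congr rfl (fun j _ => shift j)]
      simp
    · intro j _
      refine ii_of_bdd _ (Measurable.mul ((hfun_meas p).comp (by fun_prop)) mG) 1
        (fun x => abs2 _ _) _ _
  have hle : (b:ℝ) * ∫ x in (0:ℝ)..1, F x * G x ≤ ∫ x in (0:ℝ)..1, (2 * (b * p) + 1) * G x := by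
    rw [hsum]
    apply intervalIntegral.integral_mono_on zero_le_one
    · have := IntervalIntegrable.sum (μ := volume) (a := 0) (b := 1) (Finset.range b)
        (f := fun (j:ℕ) (x:ℝ) => hfun p ((q * x - γ) + a * j / b) * G x) ?_
      · simpa only [Finset.sum_fn] using this
      intro j _
      exact ii_of_bdd _ (Measurable.mul ((hfun_meas p).comp (by fun_prop)) mG) 1
        (fun x => abs2 _ _) _ _
    · exact (ii_of_bdd _ mG 1 (fun x => hfun_abs _ _) _ _).const_mul _
    · intro x _
      rw [← Finset.sum_mul]
      exact mul_le_mul_of_nonneg_right (sum_bound p hp a b hbpos hab _) (hfun_nonneg _ _)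
  rw [intervalIntegral.integral_const_mul] at hle
  have hg := comp_int p' hp' hp2 γ q' hq'
  have h3 : (2 * (b * p) + 1) * ∫ x in (0:ℝ)..1, G x ≤ (2 * (b * p) + 1) * (2 * p') :=
    mul_le_mul_of_nonneg_left hg (by positivity)
  have h4 : (d:ℝ) / q' = 1 / b := by rw [hqr']; field_simp
  rw [h4]
  have h5 : (2 * (b * p) + 1) * (2 * p') = b * (2 * p' * (2 * p + 1 / b)) := by field_simp
  exact le_of_mul_le_mul_left ((hle.trans h3).trans_eq h5) hb0

lemma vol_eq (ψ : ℕ → ℝ) (γ : ℝ) (q q' : ℕ) :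
    volume (Aset ψ γ q ∩ Aset ψ γ q') =
      ENNReal.ofReal (∫ x in (0:ℝ)..1, hfun (ψ q) (q * x - γ) * hfun (ψ q') (q' * x - γ)) := by
  set S : Set ℝ := {x | dnint (q * x - γ) < ψ q ∧ dnint (q' * x - γ) < ψ q'} with hS
  have mS : MeasurableSet S := by
    apply MeasurableSet.inter
    · exact measurableSet_lt (dnint_meas.comp (by fun_prop)) measurable_const
    · exact measurableSet_lt (dnint_meas.comp (by fun_prop)) measurable_const
  have e1 : Aset ψ γ q ∩ Aset ψ γ q' = S ∩ Set.Icc 0 1 := by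
    ext x; simp only [Aset, hS, Set.mem_inter_iff, Set.mem_ofPred_eq, Set.mem_Icc]; tauto
  have e2 : (fun x : ℝ => hfun (ψ q) (q * x - γ) * hfun (ψ q') (q' * x - γ)) =
      S.indicator (fun _ => (1:ℝ)) := by
    ext x
    simp only [hfun_eq, Set.indicator, hS, Set.mem_ofPred_eq]
    split_ifs <;> simp_all
  have hfin : volume (S ∩ Set.Icc (0:ℝ) 1) ≠ ⊤ :=
    ((measure_mono Set.inter_subset_right).trans_lt
      (by simp : volume (Set.Icc (0:ℝ) 1) < ⊤)).ne
  rw [e1, e2, intervalIntegral.integral_of_le zero_le_one, ← integral_Icc_eq_integral_Ioc,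
    integral_indicator mS, Measure.restrict_restrict mS]
  simp only [integral_const, smul_eq_mul, mul_one]
  rw [measureReal_restrict_apply MeasurableSet.univ, Set.univ_inter, ofReal_measureReal (h := hfin)]

lemma arith (p p' g n H : ℝ) (hp : 0 < p) (hp' : 0 < p') (hn : 0 < n) (hH : 0 < H)
    (h : H * g ≤ 2 * (n * p)) :
    2 * p' * (2 * p + g / n) ≤ 4 * p * p' * (1 + 2 / (2 * H)) := by
  have h1 : g / n ≤ 2 * p / H := by
    rw [div_le_div_iff₀ hn hH]; linarith
  calc 2 * p' * (2 * p + g / n) ≤ 2 * p' * (2 * p + 2 * p / H) := by gcongr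
    _ = _ := by field_simp; ring

theorem stmt8 : ∃ C₀ > (1:ℝ), ∀ H : ℕ, 2 < H →
    ∀ ψ : ℕ → ℝ, (∀ q, 1 ≤ q → 0 < ψ q) → (∀ q, 1 ≤ q → ψ q < 1/2) →
    ∀ γ : ℝ, Irrational γ →
    ∀ q q' : ℕ, 1 ≤ q' → q' < q →
    H * Nat.gcd q q' ≤ Δfun ψ q q' →
    volume (Aset ψ γ q ∩ Aset ψ γ q') ≤
      ENNReal.ofReal (4 * ψ q * ψ q' * (1 + C₀ / (2 * H))) := by
  refine ⟨2, by norm_num, ?_⟩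
  intro H hH ψ h0 h1 γ _ q q' hq' hlt hΔ
  have hq : 1 ≤ q := by omega
  have hHr : (0:ℝ) < H := by exact_mod_cast (by omega : 0 < H)
  have hqr : (0:ℝ) < q := by exact_mod_cast hq
  have hqr' : (0:ℝ) < q' := by exact_mod_cast hq'
  unfold Δfun at hΔ
  rcases le_total ((q:ℝ) * ψ q') (q' * ψ q) with hc | hc
  · rw [vol_eq]
    apply ENNReal.ofReal_le_ofReal
    refine (key _ _ (h0 q hq) (h0 q' hq') (h1 q' hq') γ q q' hq hq').trans ?_
    exact arith _ _ _ _ _ (h0 q hq) (h0 q' hq') hqr' hHr (by linarith)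
  · rw [Set.inter_comm, vol_eq]
    apply ENNReal.ofReal_le_ofReal
    refine (key _ _ (h0 q' hq') (h0 q hq) (h1 q hq) γ q' q hq' hq).trans ?_
    rw [Nat.gcd_comm]
    refine (arith _ _ _ _ _ (h0 q' hq') (h0 q hq) hqr hHr (by linarith)).trans_eq ?_
    ring
end

section
/- Let γ be a tamely Liouville irrational number, with σ_γ(Q) ≤ C_γ (log Q)^{1/4 − ε₀} for all Q ≥ 2, for some ε₀ > 0 and C_γ > 0. Let 0 < ε₁ < 2ε₀ and C > 0, and let ψ be an approximation function satisfying ψ(q) ≤ C·q⁻¹(log log q)⁻² for all q ≥ 3, ψ(1) = ψ(2) = 0, and ψ(q) = 0 whenever Ω(q) > (log q)^{1/2 + ε₁}, where Ω(q) is the number of prime factors of q counted with multiplicity. Then there exist constants C′, C″ > 0 such that for all integers q ≥ 16: ∑_{1 ≤ q′ < q} (ψ(q)/q)·gcd(q′,q)·𝟙[‖γ(q − q′)/gcd(q,q′)‖ ≤ Δ(q,q′)/gcd(q,q′)] ≤ C′·ψ(q)·(log log q)⁻²·∑_{r | q} (log r)/r + C″·ψ(q). -/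
open MeasureTheory Filter Real

/-- `σ_γ(Q)`: the infimum of all `σ > 0` with `‖qγ‖ ≥ q^{-σ}` for all `2 ≤ q ≤ Q`. -/
noncomputable def sigmaExp (γ : ℝ) (Q : ℕ) : ℝ :=
  sInf {σ : ℝ | 0 < σ ∧ ∀ q : ℕ, 2 ≤ q → q ≤ Q → (q : ℝ) ^ (-σ) ≤ dnint (q * γ)}


lemma dnint_le_abs (x : ℝ) (k : ℤ) : dnint x ≤ |x - k| := round_le x k

lemma dnint_le_half (x : ℝ) : dnint x ≤ 1 / 2 := abs_sub_round x

lemma dnint_pos (γ : ℝ) (hγ : Irrational γ) (n : ℕ) (hn : 1 ≤ n) : 0 < dnint (n * γ) := by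
  unfold dnint
  rw [abs_pos, sub_ne_zero]
  have h : Irrational ((n : ℝ) * γ) := hγ.natCast_mul (by omega)
  exact h.ne_int _

lemma dnint_sub_le (γ : ℝ) (n₁ n₂ : ℕ) (h : n₁ ≤ n₂) :
    dnint (((n₂ - n₁ : ℕ) : ℝ) * γ) ≤
      |((n₂ : ℝ) * γ - round ((n₂ : ℝ) * γ)) - ((n₁ : ℝ) * γ - round ((n₁ : ℝ) * γ))| := by
  refine (dnint_le_abs _ (round ((n₂ : ℝ) * γ) - round ((n₁ : ℝ) * γ))).trans (le_of_eq ?_)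
  push_cast [Nat.cast_sub h]
  congr 1; ring

/-- Counting points in short arcs using separation. -/
lemma sep_count (γ δ η : ℝ) (hη : 0 < η) (hδ : 0 ≤ δ) (w A B : ℕ) (hw : 1 ≤ w)
    (hsep : ∀ m : ℕ, 1 ≤ m → m < w → η ≤ dnint (m * γ)) (F : Finset ℕ)
    (hF : ∀ n ∈ F, A ≤ n ∧ n ≤ A + B ∧ dnint (n * γ) ≤ δ) :
    (F.card : ℝ) ≤ ((B : ℝ) / w + 1) * (2 * δ / η + 1) := by
  set x : ℕ → ℝ := fun n => (n : ℝ) * γ - round ((n : ℝ) * γ) with hx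
  have hxb : ∀ n ∈ F, 0 ≤ x n + δ ∧ x n + δ ≤ 2 * δ := by
    intro n hn
    have := (abs_le.mp (hF n hn).2.2)
    simp only [hx]
    constructor <;> linarith [this.1, this.2]
  have key : ∀ n₁ ∈ F, ∀ n₂ ∈ F, n₁ ≤ n₂ → (n₁ - A) / w = (n₂ - A) / w →
      ⌊(x n₁ + δ) / η⌋₊ = ⌊(x n₂ + δ) / η⌋₊ → n₁ = n₂ := by
    intro n₁ h₁ n₂ h₂ hle hd hf
    by_contra hne
    have hA₁ := (hF n₁ h₁).1
    have hlt : n₂ - n₁ < w := by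
      have e1 := Nat.div_add_mod (n₁ - A) w
      have e2 := Nat.div_add_mod (n₂ - A) w
      have e3 := Nat.mod_lt (n₂ - A) hw
      rw [hd] at e1
      omega
    have h3 := hsep (n₂ - n₁) (by omega) hlt
    have h4 := h3.trans (dnint_sub_le γ n₁ n₂ hle)
    have p1 : 0 ≤ (x n₁ + δ) / η := div_nonneg (hxb n₁ h₁).1 hη.le
    have p2 : 0 ≤ (x n₂ + δ) / η := div_nonneg (hxb n₂ h₂).1 hη.le
    have f1 := Nat.floor_le p1
    have f2 := Nat.lt_floor_add_one ((x n₁ + δ) / η)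
    have f3 := Nat.floor_le p2
    have f4 := Nat.lt_floor_add_one ((x n₂ + δ) / η)
    rw [hf] at f1 f2
    have h5 : |(x n₂ + δ) / η - (x n₁ + δ) / η| < 1 := by
      rw [abs_lt]; constructor <;> linarith
    have h6 : (x n₂ + δ) / η - (x n₁ + δ) / η = (x n₂ - x n₁) / η := by ring
    rw [h6, abs_div, abs_of_pos hη, div_lt_one hη] at h5
    exact absurd h4 (not_le.mpr h5)
  have hcard : F.card ≤ (Finset.range (B / w + 1) ×ˢ Finset.range (⌊2 * δ / η⌋₊ + 1)).card := by
    apply Finset.card_le_card_of_injOn (fun n => ((n - A) / w, ⌊(x n + δ) / η⌋₊))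
    · intro n hn
      have h := hF n hn
      simp only [Finset.coe_product, Set.mem_prod, Finset.coe_range, Set.mem_Iio]
      refine ⟨Nat.lt_succ_of_le (Nat.div_le_div_right (by omega)), Nat.lt_succ_of_le ?_⟩
      apply Nat.floor_le_floor
      have := (hxb n hn).2
      gcongr
    · intro n₁ h₁ n₂ h₂ he
      simp only [Prod.mk.injEq] at he
      rcases le_total n₁ n₂ with h | h
      · exact key n₁ h₁ n₂ h₂ h he.1 he.2
      · exact (key n₂ h₂ n₁ h₁ h he.1.symm he.2.symm).symm
  rw [Finset.card_product, Finset.card_range, Finset.card_range] at hcard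
  have hc : (F.card : ℝ) ≤ ((B / w : ℕ) + 1 : ℝ) * ((⌊2 * δ / η⌋₊ : ℕ) + 1 : ℝ) := by
    exact_mod_cast hcard
  refine hc.trans ?_
  have q1 : ((B / w : ℕ) : ℝ) ≤ (B : ℝ) / w := Nat.cast_div_le
  have q2 : ((⌊2 * δ / η⌋₊ : ℕ) : ℝ) ≤ 2 * δ / η := Nat.floor_le (by positivity)
  gcongr

/-- Counting with large minimal gap, starting at one. -/
lemma gap_count (γ δ : ℝ) (w r : ℕ) (hw : 1 ≤ w) (hδ : 0 ≤ δ)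
    (hsep : ∀ m : ℕ, 1 ≤ m → m < w → 2 * δ < dnint (m * γ)) (F : Finset ℕ)
    (hF : ∀ n ∈ F, 1 ≤ n ∧ n ≤ r ∧ dnint (n * γ) ≤ δ) :
    (F.card : ℝ) ≤ (r : ℝ) / w := by
  have key : ∀ n₁ ∈ F, ∀ n₂ ∈ F, n₁ ≤ n₂ → n₁ / w = n₂ / w → n₁ = n₂ := by
    intro n₁ h₁ n₂ h₂ hle hd
    by_contra hne
    have hlt : n₂ - n₁ < w := by
      have e1 := Nat.div_add_mod n₁ w
      have e2 := Nat.div_add_mod n₂ w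
      have e3 := Nat.mod_lt n₂ hw
      rw [hd] at e1
      omega
    have h3 := hsep (n₂ - n₁) (by omega) hlt
    have h4 := h3.trans_le (dnint_sub_le γ n₁ n₂ hle)
    have h5 := abs_sub ((n₂ : ℝ) * γ - round ((n₂ : ℝ) * γ)) ((n₁ : ℝ) * γ - round ((n₁ : ℝ) * γ))
    have h6 := (hF n₁ h₁).2.2
    have h7 := (hF n₂ h₂).2.2
    unfold dnint at h6 h7
    linarith
  have hcard : F.card ≤ (Finset.Icc 1 (r / w)).card := by
    apply Finset.card_le_card_of_injOn (fun n => n / w)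
    · intro n hn
      have h := hF n hn
      simp only [Finset.coe_Icc, Set.mem_Icc]
      refine ⟨?_, Nat.div_le_div_right h.2.1⟩
      rw [Nat.one_le_div_iff hw]
      by_contra hlt
      have := hsep n h.1 (by omega)
      linarith [h.2.2]
    · intro n₁ h₁ n₂ h₂ he
      rcases le_total n₁ n₂ with h | h
      · exact key n₁ h₁ n₂ h₂ h he
      · exact (key n₂ h₂ n₁ h₁ h he.symm).symm
  rw [Nat.card_Icc, Nat.add_sub_cancel] at hcard
  exact (by exact_mod_cast hcard : (F.card : ℝ) ≤ ((r / w : ℕ) : ℝ)).trans Nat.cast_div_le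

/-- A good denominator from Dirichlet and the Liouville bound. -/
lemma good_denom (γ c₀ S T : ℝ) (hc₀ : 0 < c₀) (hc₁ : c₀ ≤ 1) (hS : 0 ≤ S) (hT : 1 ≤ T) (M : ℕ)
    (hL : ∀ n : ℕ, 1 ≤ n → n ≤ M → c₀ * (n : ℝ) ^ (-S) ≤ dnint (n * γ))
    (hM : T ^ S / c₀ ≤ M) :
    ∃ s : ℕ, 1 ≤ s ∧ T ≤ s ∧ (s : ℝ) ≤ T ^ S / c₀ ∧
      ∀ m : ℕ, 1 ≤ m → m < (s + 1) / 2 → 1 / (2 * (s : ℝ)) ≤ dnint (m * γ) := by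
  set N := ⌊T ^ S / c₀⌋₊ with hN
  have hTS : 1 ≤ T ^ S := Real.one_le_rpow hT hS
  have h1 : 1 ≤ T ^ S / c₀ := by rw [le_div_iff₀ hc₀]; linarith
  have hN1 : 1 ≤ N := Nat.one_le_floor_iff _ |>.mpr h1
  obtain ⟨ρ, hρ, hden⟩ := Real.exists_rat_abs_sub_le_and_den_le γ hN1
  have hs1 : 1 ≤ ρ.den := ρ.den_pos
  have hsN : (ρ.den : ℝ) ≤ N := by exact_mod_cast hden
  have hNle : (N : ℝ) ≤ T ^ S / c₀ := Nat.floor_le (by linarith)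
  have hs0 : (0 : ℝ) < ρ.den := by exact_mod_cast hs1
  have hρe : (ρ : ℝ) = (ρ.num : ℝ) / ρ.den := Rat.cast_def ρ
  refine ⟨ρ.den, hs1, ?_, hsN.trans hNle, ?_⟩
  · by_contra hlt
    push Not at hlt
    have hle : ρ.den ≤ M := by
      have : (ρ.den : ℝ) ≤ M := hsN.trans (hNle.trans hM)
      exact_mod_cast this
    have h2 := hL ρ.den hs1 hle
    have h3 : dnint (ρ.den * γ) ≤ 1 / (N + 1) := by
      refine (dnint_le_abs _ ρ.num).trans ?_
      have : (ρ.den : ℝ) * γ - ρ.num = ρ.den * (γ - ρ) := by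
        rw [hρe]; field_simp
      rw [this, abs_mul, abs_of_pos hs0]
      calc (ρ.den : ℝ) * |γ - ρ| ≤ ρ.den * (1 / ((N + 1) * ρ.den)) := by gcongr
        _ = 1 / (N + 1) := by field_simp
    have h4 : (T : ℝ) ^ (-S) ≤ (ρ.den : ℝ) ^ (-S) :=
      Real.rpow_le_rpow_of_nonpos hs0 hlt.le (by linarith)
    have h5 : T ^ S / c₀ < N + 1 := Nat.lt_floor_add_one _
    have h6 : 1 / ((N : ℝ) + 1) < c₀ * T ^ (-S) := by
      rw [Real.rpow_neg (by linarith), ← div_eq_mul_inv]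
      have : c₀ / T ^ S = 1 / (T ^ S / c₀) := by field_simp
      rw [this]
      exact one_div_lt_one_div_of_lt (by positivity) h5
    have h7 : c₀ * T ^ (-S) ≤ c₀ * (ρ.den : ℝ) ^ (-S) := by gcongr
    linarith
  · intro m hm hmw
    set s := ρ.den with hs
    have h2m : 2 * m ≤ s := by omega
    set k := round ((m : ℝ) * γ) with hk
    have hne : (m : ℤ) * ρ.num - k * s ≠ 0 := by
      intro h0
      have hdvd : (s : ℤ) ∣ (m : ℤ) * ρ.num := ⟨k, by linarith⟩
      have hcop : IsCoprime (s : ℤ) ρ.num := by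
        rw [Int.isCoprime_iff_gcd_eq_one, Int.gcd_comm]
        exact ρ.reduced
      have h3 := hcop.dvd_of_dvd_mul_right hdvd
      have h4 := Int.le_of_dvd (by omega) h3
      omega
    have h5 : (1 : ℝ) ≤ |(m : ℝ) * ρ.num - k * s| := by
      exact_mod_cast Int.one_le_abs hne
    have h6 : (m : ℝ) * γ - k = ((m : ℝ) * ρ.num - k * s) / s + m * (γ - ρ) := by
      rw [hρe]; field_simp; ring
    have h7 : |(m : ℝ) * (γ - ρ)| ≤ 1 / (2 * s) := by
      rw [abs_mul, Nat.abs_cast]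
      have hm2 : (m : ℝ) ≤ s / 2 := by
        have : (2 * m : ℝ) ≤ s := by exact_mod_cast h2m
        linarith
      calc (m : ℝ) * |γ - ρ| ≤ (s / 2) * (1 / ((N + 1) * s)) := by gcongr
        _ ≤ (s / 2) * (1 / (s * s)) := by gcongr; linarith
        _ = 1 / (2 * s) := by field_simp
    have h8 : 1 / (s : ℝ) ≤ |((m : ℝ) * ρ.num - k * s) / s| := by
      rw [abs_div, abs_of_pos hs0]; gcongr
    unfold dnint
    rw [← hk, h6]
    have h9 := abs_sub_abs_le_abs_add (((m : ℝ) * ρ.num - k * s) / s) (m * (γ - ρ))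
    have h10 : 1 / (s : ℝ) = 1 / (2 * s) + 1 / (2 * s) := by field_simp; norm_num
    linarith

lemma block_count (γ c₀ S T C₁ : ℝ) (hc₀ : 0 < c₀) (hc₁ : c₀ ≤ 1) (hS : 0 ≤ S) (hT : 1 ≤ T)
    (hC₁ : 1 ≤ C₁) (M r : ℕ)
    (hL : ∀ n : ℕ, 1 ≤ n → n ≤ M → c₀ * (n : ℝ) ^ (-S) ≤ dnint (n * γ))
    (hM : T ^ S / c₀ ≤ M) (hr : T ^ S / c₀ * T ≤ r) (F : Finset ℕ)
    (hF : ∀ t ∈ F, 1 ≤ t ∧ t < r ∧ (r : ℝ) < T * t ∧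
      dnint (((r - t : ℕ) : ℝ) * γ) ≤ C₁ * ((r : ℝ) / t) / T) :
    (F.card : ℝ) ≤ (Real.logb 2 T + 1) * (30 * C₁ * r / T) := by
  obtain ⟨s, hs1, hTs, hsle, hsep⟩ := good_denom γ c₀ S T hc₀ hc₁ hS hT M hL hM
  have hT0 : 0 < T := by linarith
  have hs0 : (0 : ℝ) < s := by exact_mod_cast hs1
  set J := ⌊Real.logb 2 T⌋₊ + 1 with hJ
  have hlog0 : 0 ≤ Real.logb 2 T := Real.logb_nonneg (by norm_num) hT
  have hmaps : ∀ t ∈ F, Nat.log 2 (r / t) ∈ Finset.range J := by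
    intro t ht
    obtain ⟨h1, h2, h3, -⟩ := hF t ht
    have ht0 : (0 : ℝ) < t := by exact_mod_cast h1
    rw [Finset.mem_range, hJ, Nat.lt_succ_iff]
    apply Nat.le_floor
    rw [Real.le_logb_iff_rpow_le (by norm_num) hT0, Real.rpow_natCast]
    have h4 : 2 ^ Nat.log 2 (r / t) ≤ r / t :=
      Nat.pow_log_le_self 2 (by have := Nat.div_pos h2.le h1; omega)
    have h5 : ((2 ^ Nat.log 2 (r / t) : ℕ) : ℝ) ≤ (r : ℝ) / t :=
      (by exact_mod_cast h4 : ((2 ^ Nat.log 2 (r / t) : ℕ) : ℝ) ≤ ((r / t : ℕ) : ℝ)).trans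
        Nat.cast_div_le
    push_cast at h5
    refine h5.trans ?_
    rw [div_le_iff₀ ht0]; exact h3.le
  have hfib : ∀ j ∈ Finset.range J,
      (((F.filter (fun t => Nat.log 2 (r / t) = j)).card : ℕ) : ℝ) ≤ 30 * C₁ * r / T := by
    intro j hj
    set G := F.filter (fun t => Nat.log 2 (r / t) = j) with hG
    have hinj : Set.InjOn (fun t => r - t) (G : Set ℕ) := by
      intro a ha b hb hab
      have h1 := (hF a (Finset.mem_filter.mp ha).1).2.1
      have h2 := (hF b (Finset.mem_filter.mp hb).1).2.1
      simp only at hab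
      omega
    rw [← Finset.card_image_of_injOn hinj]
    set δ := 2 * C₁ * 2 ^ j / T with hδ
    have h2j : (0 : ℝ) < 2 ^ j := by positivity
    have hδ0 : 0 ≤ δ := by positivity
    have hsc := sep_count γ δ (1 / (2 * s)) (by positivity) hδ0 ((s + 1) / 2) (r - r / 2 ^ j)
      (r / 2 ^ j) (by omega) hsep (G.image (fun t => r - t)) (by
        intro n hn
        obtain ⟨t, ht, rfl⟩ := Finset.mem_image.mp hn
        obtain ⟨htF, hlog⟩ := Finset.mem_filter.mp ht
        obtain ⟨h1, h2, h3, h4⟩ := hF t htF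
        have ht0 : (0 : ℝ) < t := by exact_mod_cast h1
        have hrt : r / t ≠ 0 := by have := Nat.div_pos h2.le h1; omega
        have h5 : 2 ^ j ≤ r / t := hlog ▸ Nat.pow_log_le_self 2 hrt
        have h6 : r / t < 2 ^ (j + 1) := hlog ▸ Nat.lt_pow_succ_log_self (by norm_num) _
        have h7 : t * 2 ^ j ≤ r := by
          have := (Nat.le_div_iff_mul_le h1).mp h5
          linarith
        have h8 : r < 2 ^ (j + 1) * t := (Nat.div_lt_iff_lt_mul h1).mp h6
        have h9 : t ≤ r / 2 ^ j := (Nat.le_div_iff_mul_le (by positivity)).mpr h7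
        have h10 : r / 2 ^ j ≤ r := Nat.div_le_self _ _
        refine ⟨by omega, by omega, h4.trans ?_⟩
        have h11 : (r : ℝ) / t ≤ 2 ^ (j + 1) := by
          rw [div_le_iff₀ ht0]
          exact_mod_cast h8.le
        calc C₁ * ((r : ℝ) / t) / T ≤ C₁ * 2 ^ (j + 1) / T := by gcongr
          _ = δ := by rw [hδ, pow_succ]; ring)
    refine hsc.trans ?_
    have h2T : (2 : ℝ) ^ j ≤ T := by
      have hj' : j ≤ ⌊Real.logb 2 T⌋₊ := by
        rw [Finset.mem_range] at hj; omega
      have := (Nat.le_floor_iff hlog0).mp hj'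
      rwa [Real.le_logb_iff_rpow_le (by norm_num) hT0, Real.rpow_natCast] at this
    set R : ℝ := (r : ℝ) / 2 ^ j with hR
    have hsR : (s : ℝ) ≤ R := by
      rw [hR, le_div_iff₀ h2j]
      calc (s : ℝ) * 2 ^ j ≤ T ^ S / c₀ * T := by gcongr
        _ ≤ r := hr
    have hB : ((r / 2 ^ j : ℕ) : ℝ) ≤ R := by
      rw [hR]
      refine Nat.cast_div_le.trans (le_of_eq ?_)
      push_cast
      rfl
    have hw : (s : ℝ) / 2 ≤ ((s + 1) / 2 : ℕ) := by
      have : s ≤ 2 * ((s + 1) / 2) := by omega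
      have : (s : ℝ) ≤ 2 * ((s + 1) / 2 : ℕ) := by exact_mod_cast this
      linarith
    have hR0 : 0 < R := hs0.trans_le hsR
    have a1 : ((r / 2 ^ j : ℕ) : ℝ) / ((s + 1) / 2 : ℕ) + 1 ≤ 3 * R / s := by
      calc ((r / 2 ^ j : ℕ) : ℝ) / ((s + 1) / 2 : ℕ) + 1 ≤ R / (s / 2) + R / s := by
            gcongr
            rwa [le_div_iff₀ hs0, one_mul]
        _ = 3 * R / s := by field_simp; ring
    have hsδ : 1 ≤ s * δ := by
      rw [hδ]
      have h1 : (1 : ℝ) ≤ 2 ^ j := one_le_pow₀ (by norm_num)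
      calc (1 : ℝ) ≤ 2 * 1 * 1 := by norm_num
        _ ≤ 2 * C₁ * 2 ^ j := by gcongr
        _ = T * (2 * C₁ * 2 ^ j / T) := by field_simp
        _ ≤ s * (2 * C₁ * 2 ^ j / T) := by gcongr
    have a2 : 2 * δ / (1 / (2 * (s : ℝ))) + 1 ≤ 5 * (s * δ) := by
      have : 2 * δ / (1 / (2 * (s : ℝ))) = 4 * (s * δ) := by field_simp; ring
      rw [this]; linarith
    calc _ ≤ (3 * R / s) * (5 * (s * δ)) := by
          apply mul_le_mul a1 a2 (by positivity) (by positivity)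
      _ = 15 * R * δ := by field_simp; ring
      _ = 30 * C₁ * r / T := by rw [hR, hδ]; field_simp; ring
  have hsum := Finset.card_eq_sum_card_fiberwise hmaps
  rw [hsum]
  push_cast
  calc _ ≤ ∑ j ∈ Finset.range J, 30 * C₁ * r / T := Finset.sum_le_sum hfib
    _ = (J : ℝ) * (30 * C₁ * r / T) := by simp
    _ ≤ _ := by
      have : (J : ℝ) ≤ Real.logb 2 T + 1 := by
        rw [hJ]; push_cast
        linarith [Nat.floor_le hlog0]
      gcongr

lemma card_divisors_le_two_pow (q : ℕ) (hq : q ≠ 0) :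
    q.divisors.card ≤ 2 ^ q.primeFactorsList.length := by
  induction q using Nat.recOnMul with
  | zero => exact absurd rfl hq
  | one => simp
  | prime p hp => simp [hp.divisors, Nat.primeFactorsList_prime hp, Finset.card_pair hp.one_lt.ne]
  | mul a b iha ihb =>
    have ha : a ≠ 0 := by rintro rfl; simp at hq
    have hb : b ≠ 0 := by rintro rfl; simp at hq
    have h1 : (a * b).primeFactorsList.length
        = a.primeFactorsList.length + b.primeFactorsList.length := by
      rw [(Nat.perm_primeFactorsList_mul ha hb).length_eq, List.length_append]
    rw [h1, pow_add]
    calc _ ≤ a.divisors.card * b.divisors.card := by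
          rw [Nat.divisors_mul]; exact Finset.card_mul_le
      _ ≤ _ := Nat.mul_le_mul (iha ha) (ihb hb)

lemma sigma_facts (γ : ℝ) (hγ : Irrational γ) (Q : ℕ) (hQ : 2 ≤ Q) :
    1 ≤ sigmaExp γ Q ∧ ∀ s : ℝ, sigmaExp γ Q < s → ∀ n : ℕ, 2 ≤ n → n ≤ Q →
      (n : ℝ) ^ (-s) ≤ dnint (n * γ) := by
  have hne : {σ : ℝ | 0 < σ ∧ ∀ q : ℕ, 2 ≤ q → q ≤ Q → (q : ℝ) ^ (-σ) ≤ dnint (q * γ)}.Nonempty := by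
    obtain ⟨n₀, hn₀, hmin⟩ := Finset.exists_min_image (Finset.Icc 2 Q)
      (fun n : ℕ => dnint (n * γ)) ⟨2, by simp [hQ]⟩
    have hpos : 0 < dnint (n₀ * γ) :=
      dnint_pos γ hγ n₀ (by have := (Finset.mem_Icc.mp hn₀).1; omega)
    obtain ⟨k, hk⟩ := exists_pow_lt_of_lt_one hpos (by norm_num : (1 / 2 : ℝ) < 1)
    refine ⟨(k : ℝ) + 1, by positivity, ?_⟩
    intro n hn hnQ
    have hn' : (2 : ℝ) ≤ n := by exact_mod_cast hn
    calc (n : ℝ) ^ (-((k : ℝ) + 1)) ≤ (2 : ℝ) ^ (-((k : ℝ) + 1)) :=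
          Real.rpow_le_rpow_of_nonpos (by norm_num) hn' (by
            have : (0 : ℝ) ≤ k := Nat.cast_nonneg k
            linarith)
      _ ≤ (2 : ℝ) ^ (-(k : ℝ)) := Real.rpow_le_rpow_of_exponent_le (by norm_num) (by linarith)
      _ = (1 / 2) ^ k := by rw [Real.rpow_neg (by norm_num), Real.rpow_natCast]; simp
      _ ≤ dnint (n₀ * γ) := hk.le
      _ ≤ dnint (n * γ) := hmin n (by simp [hn, hnQ])
  constructor
  · apply le_csInf hne
    rintro σ ⟨hσ, h⟩
    have h1 := (h 2 le_rfl hQ).trans (dnint_le_half _)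
    by_contra hlt
    push Not at hlt
    have h2 : (2 : ℝ) ^ (-1 : ℝ) < ((2 : ℕ) : ℝ) ^ (-σ) :=
      Real.rpow_lt_rpow_of_exponent_lt (by norm_num) (by linarith)
    rw [Real.rpow_neg_one] at h2
    norm_num at h1 h2
    linarith
  · intro s hs n hn hnQ
    obtain ⟨σ, ⟨-, h⟩, hlt⟩ := exists_lt_of_csInf_lt hne hs
    refine le_trans ?_ (h n hn hnQ)
    exact Real.rpow_le_rpow_of_exponent_le (by exact_mod_cast (by omega : 1 ≤ n)) (by linarith)

lemma eps_le (γ : ℝ) (hγ : Irrational γ) (ε₀ Cγ : ℝ)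
    (htame : ∀ Q : ℕ, 2 ≤ Q → sigmaExp γ Q ≤ Cγ * (Real.logb 2 Q) ^ ((1:ℝ)/4 - ε₀)) :
    ε₀ ≤ 1 / 4 := by
  by_contra hlt
  push Not at hlt
  have h1 : Tendsto (fun k : ℕ => Cγ * (k : ℝ) ^ (-(ε₀ - 1 / 4))) atTop (nhds (Cγ * 0)) :=
    ((tendsto_rpow_neg_atTop (by linarith : 0 < ε₀ - 1 / 4)).comp
      tendsto_natCast_atTop_atTop).const_mul Cγ
  rw [mul_zero] at h1
  have h2 := h1.eventually (gt_mem_nhds (by norm_num : (0 : ℝ) < 1))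
  obtain ⟨k, hk, hk1⟩ := (h2.and (eventually_ge_atTop 1)).exists
  have hQ : 2 ≤ 2 ^ k := by
    calc 2 = 2 ^ 1 := rfl
      _ ≤ 2 ^ k := Nat.pow_le_pow_right (by norm_num) hk1
  have h3 := htame (2 ^ k) hQ
  have h4 := (sigma_facts γ hγ (2 ^ k) hQ).1
  have h5 : Real.logb 2 ((2 ^ k : ℕ) : ℝ) = k := by
    push_cast
    rw [Real.logb_pow, Real.logb_self_eq_one (by norm_num), mul_one]
  rw [h5] at h3
  have h6 : (1 : ℝ) / 4 - ε₀ = -(ε₀ - 1 / 4) := by ring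
  rw [h6] at h3
  linarith

lemma liouville_bound (γ : ℝ) (hγ : Irrational γ) (a Cγ : ℝ) (ha : 0 ≤ a)
    (htame : ∀ Q : ℕ, 2 ≤ Q → sigmaExp γ Q ≤ Cγ * (Real.logb 2 Q) ^ a) :
    ∃ c₀ : ℝ, 0 < c₀ ∧ c₀ ≤ 1 ∧ ∀ q : ℕ, 2 ≤ q → ∀ n : ℕ, 1 ≤ n → n ≤ q →
      c₀ * (n : ℝ) ^ (-((Cγ + 1) * (Real.logb 2 q) ^ a)) ≤ dnint (n * γ) := by
  obtain ⟨c, hc⟩ : ∃ c, c = dnint (((1 : ℕ) : ℝ) * γ) := ⟨_, rfl⟩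
  have hp : 0 < c := hc ▸ dnint_pos γ hγ 1 le_rfl
  have hh : c ≤ 1 / 2 := hc ▸ dnint_le_half (((1 : ℕ) : ℝ) * γ)
  refine ⟨c, hp, by linarith, ?_⟩
  intro q hq n hn hnq
  rcases Nat.lt_or_ge n 2 with h | h
  · obtain rfl : n = 1 := by omega
    rw [← hc]
    simp
  · have h1 : 0 < Real.logb 2 q ^ a := by
      apply Real.rpow_pos_of_pos
      exact Real.logb_pos (by norm_num) (by exact_mod_cast (by omega : 1 < q))
    have h2 := (sigma_facts γ hγ q hq).2 ((Cγ + 1) * (Real.logb 2 q) ^ a)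
      (by have := htame q hq; linarith) n h hnq
    have h3 : (0 : ℝ) ≤ (n : ℝ) ^ (-((Cγ + 1) * (Real.logb 2 q) ^ a)) := by positivity
    nlinarith

lemma logb_two_le_self (x : ℝ) (hx : 0 < x) : Real.logb 2 x ≤ x := by
  rw [Real.logb, div_le_iff₀ (Real.log_pos (by norm_num))]
  have h1 := Real.log_le_sub_one_of_pos (by positivity : 0 < x / 2)
  rw [Real.log_div hx.ne' (by norm_num)] at h1
  have h2 := Real.log_two_gt_d9
  have h3 := Real.log_two_lt_d9
  nlinarith

lemma params (a b K c₀ C : ℝ) (ha : 0 ≤ a) (hb : 0 < b) (hab : b + 2 * a < 1) (hK : 1 ≤ K)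
    (hc₀ : 0 < c₀) :
    ∀ᶠ l : ℝ in atTop, 16 * C < c₀ * (2 : ℝ) ^ (l ^ b) ∧
      (Real.logb 2 l) ^ 2 ≤ (2 : ℝ) ^ (l ^ b) ∧
      ((2 : ℝ) ^ (l ^ b)) ^ ((K * l ^ a + 3) * (K * l ^ a + 2)) / c₀ ≤ (2 : ℝ) ^ l := by
  have t1 : Tendsto (fun l : ℝ => l ^ b) atTop atTop := tendsto_rpow_atTop hb
  have e1 : ∀ᶠ l : ℝ in atTop, 16 * C / c₀ < l ^ b := t1.eventually_gt_atTop _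
  have t2 : Tendsto (fun l : ℝ => l ^ (1 - (b + 2 * a))) atTop atTop :=
    tendsto_rpow_atTop (by linarith)
  have e2 : ∀ᶠ l : ℝ in atTop, 12 * K ^ 2 + |Real.logb 2 (1 / c₀)| ≤ l ^ (1 - (b + 2 * a)) :=
    t2.eventually_ge_atTop _
  have e3 : ∀ᶠ l : ℝ in atTop, ‖Real.log l‖ ≤ (1 / 4) * ‖l ^ b‖ :=
    (isLittleO_log_rpow_atTop hb).def (by norm_num)
  filter_upwards [e1, e2, e3, eventually_ge_atTop 4] with l h1 h2 h3 h4
  have hl0 : 0 < l := by linarith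
  have hlb : 0 < l ^ b := Real.rpow_pos_of_pos hl0 b
  have hX : l ^ b ≤ (2 : ℝ) ^ (l ^ b) := by
    have := logb_two_le_self _ hlb
    rwa [Real.logb_le_iff_le_rpow (by norm_num) hlb] at this
  have hL0 : 0 < Real.logb 2 l := Real.logb_pos (by norm_num) (by linarith)
  have hL1 : 2 * Real.logb 2 l ≤ l ^ b := by
    have hlog : 0 ≤ Real.log l := Real.log_nonneg (by linarith)
    rw [Real.norm_of_nonneg hlog, Real.norm_of_nonneg hlb.le] at h3
    rw [Real.logb, ← mul_div_assoc, div_le_iff₀ (Real.log_pos (by norm_num))]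
    have := Real.log_two_gt_d9
    nlinarith
  refine ⟨?_, ?_, ?_⟩
  · rw [div_lt_iff₀ hc₀] at h1
    nlinarith
  · have h5 := logb_two_le_self _ hL0
    rw [Real.logb_le_iff_le_rpow (by norm_num) hL0] at h5
    calc (Real.logb 2 l) ^ 2 ≤ ((2 : ℝ) ^ (Real.logb 2 l)) ^ 2 := by gcongr
      _ = (2 : ℝ) ^ (2 * Real.logb 2 l) := by
        rw [← Real.rpow_natCast, ← Real.rpow_mul (by norm_num)]; congr 1; push_cast; ring
      _ ≤ _ := Real.rpow_le_rpow_of_exponent_le (by norm_num) hL1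
  · have hla : 1 ≤ l ^ a := Real.one_le_rpow (by linarith) ha
    have hKa : 1 ≤ K * l ^ a := by nlinarith
    have hc : 1 / c₀ = (2 : ℝ) ^ (Real.logb 2 (1 / c₀)) :=
      (Real.rpow_logb (by norm_num) (by norm_num) (by positivity)).symm
    rw [div_eq_mul_one_div, hc, ← Real.rpow_mul (by norm_num), ← Real.rpow_add (by norm_num)]
    apply Real.rpow_le_rpow_of_exponent_le (by norm_num)
    have e : l = l ^ (b + 2 * a) * l ^ (1 - (b + 2 * a)) := by
      rw [← Real.rpow_add hl0]; simp
    have e' : l ^ (b + 2 * a) = l ^ b * (l ^ a) ^ 2 := by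
      rw [Real.rpow_add hl0, mul_comm 2 a, Real.rpow_mul hl0.le]; norm_cast
    have hge : 1 ≤ l ^ (b + 2 * a) := Real.one_le_rpow (by linarith) (by linarith)
    have h6 : (K * l ^ a + 3) * (K * l ^ a + 2) ≤ 12 * (K * l ^ a) ^ 2 := by nlinarith
    have h7 : l ^ b * ((K * l ^ a + 3) * (K * l ^ a + 2)) ≤ l ^ (b + 2 * a) * (12 * K ^ 2) := by
      calc _ ≤ l ^ b * (12 * (K * l ^ a) ^ 2) := by gcongr
        _ = _ := by rw [e']; ring
    have h8 : Real.logb 2 (1 / c₀) ≤ l ^ (b + 2 * a) * |Real.logb 2 (1 / c₀)| := by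
      have := le_abs_self (Real.logb 2 (1 / c₀))
      nlinarith [abs_nonneg (Real.logb 2 (1 / c₀))]
    calc _ ≤ l ^ (b + 2 * a) * (12 * K ^ 2 + |Real.logb 2 (1 / c₀)|) := by linarith
      _ ≤ l ^ (b + 2 * a) * l ^ (1 - (b + 2 * a)) := by gcongr
      _ = l := e.symm

lemma psi_crude (C : ℝ) (hC : 0 < C) (ψ : ℕ → ℝ)
    (hub : ∀ q : ℕ, 3 ≤ q → ψ q ≤ C / ((q : ℝ) * (Real.logb 2 (Real.logb 2 q)) ^ 2))
    (hψ1 : ψ 1 = 0) (hψ2 : ψ 2 = 0) (n : ℕ) (hn : 1 ≤ n) : ψ n ≤ 4 * C / n := by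
  have hn0 : (0 : ℝ) < n := by exact_mod_cast hn
  rcases Nat.lt_or_ge n 3 with h | h
  · have : ψ n = 0 := by
      obtain rfl | rfl : n = 1 ∨ n = 2 := by omega
      · exact hψ1
      · exact hψ2
    rw [this]; positivity
  · have hn3 : (3 : ℝ) ≤ n := by exact_mod_cast h
    have h1 : (3 / 2 : ℝ) ≤ Real.logb 2 n := by
      rw [Real.le_logb_iff_rpow_le (by norm_num) hn0]
      refine le_trans ?_ hn3
      have : ((2 : ℝ) ^ (3 / 2 : ℝ)) ^ 2 = 8 := by
        rw [← Real.rpow_natCast, ← Real.rpow_mul (by norm_num)]; norm_num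
      nlinarith
    have h2 : (1 / 2 : ℝ) ≤ Real.logb 2 (Real.logb 2 n) := by
      rw [Real.le_logb_iff_rpow_le (by norm_num) (by linarith)]
      refine le_trans ?_ h1
      have : ((2 : ℝ) ^ (1 / 2 : ℝ)) ^ 2 = 2 := by
        rw [← Real.rpow_natCast, ← Real.rpow_mul (by norm_num)]; norm_num
      nlinarith
    refine (hub n h).trans ?_
    rw [div_le_div_iff₀ (by positivity) hn0]
    have h3 : 1 ≤ 4 * (Real.logb 2 (Real.logb 2 n)) ^ 2 := by nlinarith
    calc C * n = C * n * 1 := by ring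
      _ ≤ C * n * (4 * (Real.logb 2 (Real.logb 2 n)) ^ 2) := by gcongr
      _ = _ := by ring

/-- Large gcd. -/
lemma perd_A (γ c₀ S X C : ℝ) (hc₀ : 0 < c₀) (hS : 0 ≤ S) (hC : 0 < C) (hX : 1 ≤ X)
    (hXC : 16 * C < c₀ * X) (ψ : ℕ → ℝ) (hψ : ∀ n : ℕ, 1 ≤ n → ψ n ≤ 4 * C / n)
    (q d r : ℕ) (hq : q = d * r) (hd : 1 ≤ d) (hr : 1 ≤ r) (hXq : X ≤ q)
    (hL : ∀ n : ℕ, 1 ≤ n → n ≤ q → c₀ * (n : ℝ) ^ (-S) ≤ dnint (n * γ))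
    (hdX : X ^ (S + 2) ≤ d) (F : Finset ℕ)
    (hF : ∀ t ∈ F, 1 ≤ t ∧ t < r ∧
      dnint (((r - t : ℕ) : ℝ) * γ) ≤ r * ψ (d * t) + t * ψ q) :
    (F.card : ℝ) ≤ r * (2 / X) := by
  have hX0 : 0 < X := by linarith
  have hr0 : (0 : ℝ) < r := by exact_mod_cast hr
  have hd0 : (0 : ℝ) < d := by exact_mod_cast hd
  set δ := 8 * C * X / d with hδ
  rw [← Finset.card_filter_add_card_filter_not (fun t : ℕ => X * t ≤ r)]
  have c1 : ((F.filter (fun t : ℕ => X * t ≤ r)).card : ℝ) ≤ r / X := by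
    have : (F.filter (fun t : ℕ => X * t ≤ r)) ⊆ Finset.Icc 1 ⌊(r : ℝ) / X⌋₊ := by
      intro t ht
      obtain ⟨h1, h2⟩ := Finset.mem_filter.mp ht
      rw [Finset.mem_Icc]
      refine ⟨(hF t h1).1, Nat.le_floor ?_⟩
      rw [le_div_iff₀ hX0]; linarith
    have h := Finset.card_le_card this
    rw [Nat.card_Icc, Nat.add_sub_cancel] at h
    exact (by exact_mod_cast h : _ ≤ ((⌊(r : ℝ) / X⌋₊ : ℕ) : ℝ)).trans
      (Nat.floor_le (by positivity))
  have c2 : ((F.filter (fun t : ℕ => ¬ X * t ≤ r)).card : ℝ) ≤ r / X := by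
    set G := F.filter (fun t : ℕ => ¬ X * t ≤ r) with hG
    have hinj : Set.InjOn (fun t => r - t) (G : Set ℕ) := by
      intro a ha b hb hab
      have h1 := (hF a (Finset.mem_filter.mp ha).1).2.1
      have h2 := (hF b (Finset.mem_filter.mp hb).1).2.1
      simp only at hab
      omega
    rw [← Finset.card_image_of_injOn hinj]
    have hg := gap_count γ δ (⌊X⌋₊ + 1) r (by omega) (by positivity) (by
        intro m hm hmw
        have hmX : (m : ℝ) ≤ X := (Nat.le_floor_iff hX0.le).mp (by omega)
        have hm0 : (0 : ℝ) < m := by exact_mod_cast hm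
        have hmq : m ≤ q := by exact_mod_cast hmX.trans hXq
        have h1 := hL m hm hmq
        have h2 : X ^ (-S) ≤ (m : ℝ) ^ (-S) :=
          Real.rpow_le_rpow_of_nonpos hm0 hmX (by linarith)
        have h3 : c₀ * X ^ (-S) ≤ c₀ * (m : ℝ) ^ (-S) := by gcongr
        refine lt_of_lt_of_le ?_ (h3.trans h1)
        have h4 : X ^ (S + 2) = X ^ S * X * X := by
          rw [Real.rpow_add hX0]; norm_cast; ring
        have hXS : 0 < X ^ S := Real.rpow_pos_of_pos hX0 S
        rw [hδ, Real.rpow_neg hX0.le, ← div_eq_mul_inv, ← mul_div_assoc,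
          div_lt_div_iff₀ hd0 hXS]
        calc 2 * (8 * C * X) * X ^ S = 16 * C * (X * X ^ S) := by ring
          _ < c₀ * X * (X * X ^ S) := by gcongr
          _ = c₀ * X ^ (S + 2) := by rw [h4]; ring
          _ ≤ c₀ * d := by gcongr) (G.image (fun t => r - t)) (by
        intro n hn
        obtain ⟨t, ht, rfl⟩ := Finset.mem_image.mp hn
        obtain ⟨htF, hlt⟩ := Finset.mem_filter.mp ht
        obtain ⟨h1, h2, h3⟩ := hF t htF
        push Not at hlt
        have ht0 : (0 : ℝ) < t := by exact_mod_cast h1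
        refine ⟨by omega, by omega, h3.trans ?_⟩
        have htr : (t : ℝ) ≤ r := by exact_mod_cast h2.le
        have p1 := hψ (d * t) (Nat.mul_pos hd h1)
        have p2 := hψ q (by rw [hq]; exact Nat.mul_pos hd hr)
        have p3 : (r : ℝ) / t ≤ X := by rw [div_le_iff₀ ht0]; exact hlt.le
        have p4 : (t : ℝ) / r ≤ X := (by rw [div_le_one hr0]; exact htr : (t : ℝ) / r ≤ 1).trans hX
        have hqr : (q : ℝ) = d * r := by rw [hq]; push_cast; ring
        calc (r : ℝ) * ψ (d * t) + t * ψ q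
            ≤ r * (4 * C / ((d * t : ℕ) : ℝ)) + t * (4 * C / q) := by gcongr
          _ = 4 * C / d * (r / t) + 4 * C / d * (t / r) := by
              rw [hqr]; push_cast; field_simp
          _ ≤ 4 * C / d * X + 4 * C / d * X := by gcongr
          _ = δ := by rw [hδ]; ring)
    refine hg.trans ?_
    gcongr
    push_cast
    exact (Nat.lt_floor_add_one X).le
  push_cast
  calc _ ≤ (r : ℝ) / X + r / X := add_le_add c1 c2
    _ = _ := by ring

/-- Small gcd. -/
lemma perd_B (γ c₀ S C : ℝ) (hc₀ : 0 < c₀) (hc₁ : c₀ ≤ 1) (hS : 0 ≤ S) (hC : 0 < C)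
    (ψ : ℕ → ℝ)
    (hub : ∀ q : ℕ, 3 ≤ q → ψ q ≤ C / ((q : ℝ) * (Real.logb 2 (Real.logb 2 q)) ^ 2))
    (q d r : ℕ) (hq16 : 16 ≤ q) (hq : q = d * r) (hd : 1 ≤ d) (hr : 1 ≤ r)
    (L T : ℝ) (hLdef : L = Real.logb 2 (Real.logb 2 q)) (hL2 : 2 ≤ L) (hTdef : T = d * L ^ 2)
    (hL : ∀ n : ℕ, 1 ≤ n → n ≤ q → c₀ * (n : ℝ) ^ (-S) ≤ dnint (n * γ))
    (hTq : T ^ (S + 2) / c₀ ≤ q) (F : Finset ℕ)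
    (hF : ∀ t ∈ F, 1 ≤ t ∧ t < r ∧
      dnint (((r - t : ℕ) : ℝ) * γ) ≤ r * ψ (d * t) + t * ψ q) :
    (F.card : ℝ) ≤ r * ((30 * (5 * C + 1) + 1) * (Real.logb 2 T + 1) / T) := by
  have hr0 : (0 : ℝ) < r := by exact_mod_cast hr
  have hd1 : (1 : ℝ) ≤ d := by exact_mod_cast hd
  have hd0 : (0 : ℝ) < d := by linarith
  have hqr : (q : ℝ) = d * r := by rw [hq]; push_cast; ring
  have hq0 : (16 : ℝ) ≤ q := by exact_mod_cast hq16
  have hdT : (d : ℝ) ≤ T := by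
    rw [hTdef]
    have : 1 ≤ L ^ 2 := one_le_pow₀ (by linarith)
    nlinarith
  have hT1 : 1 ≤ T := hd1.trans hdT
  have hT0 : 0 < T := by linarith
  have hTS : 1 ≤ T ^ S := Real.one_le_rpow hT1 hS
  have hT2 : T ^ (S + 2) = T ^ S * T ^ 2 := by rw [Real.rpow_add hT0]; norm_cast
  have hlog0 : 0 ≤ Real.logb 2 T := Real.logb_nonneg (by norm_num) hT1
  rw [hT2, div_le_iff₀ hc₀] at hTq
  have hTT : T ^ 2 ≤ q := by
    have : T ^ 2 ≤ T ^ S * T ^ 2 := by nlinarith [sq_nonneg T]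
    nlinarith
  have hM : T ^ S / c₀ ≤ q := by
    rw [div_le_iff₀ hc₀]
    refine le_trans ?_ hTq
    have : 1 ≤ T ^ 2 := one_le_pow₀ hT1
    nlinarith
  have hrT : T ^ S / c₀ * T ≤ r := by
    have h1 : d * (T ^ S * T) ≤ d * (r * c₀) := by
      calc d * (T ^ S * T) ≤ T * (T ^ S * T) := by gcongr
        _ = T ^ S * T ^ 2 := by ring
        _ ≤ q * c₀ := hTq
        _ = d * (r * c₀) := by rw [hqr]; ring
    have h2 := le_of_mul_le_mul_left h1 hd0
    rw [div_mul_eq_mul_div, div_le_iff₀ hc₀]; exact h2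
  rw [← Finset.card_filter_add_card_filter_not (fun t : ℕ => T * t ≤ r)]
  have c1 : ((F.filter (fun t : ℕ => T * t ≤ r)).card : ℝ) ≤ r / T := by
    have : (F.filter (fun t : ℕ => T * t ≤ r)) ⊆ Finset.Icc 1 ⌊(r : ℝ) / T⌋₊ := by
      intro t ht
      obtain ⟨h1, h2⟩ := Finset.mem_filter.mp ht
      rw [Finset.mem_Icc]
      refine ⟨(hF t h1).1, Nat.le_floor ?_⟩
      rw [le_div_iff₀ hT0]; linarith
    have h := Finset.card_le_card this
    rw [Nat.card_Icc, Nat.add_sub_cancel] at h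
    exact (by exact_mod_cast h : _ ≤ ((⌊(r : ℝ) / T⌋₊ : ℕ) : ℝ)).trans
      (Nat.floor_le (by positivity))
  have c2 := block_count γ c₀ S T (5 * C + 1) hc₀ hc₁ hS hT1 (by linarith) q r hL hM hrT
    (F.filter (fun t : ℕ => ¬ T * t ≤ r)) (by
      intro t ht
      obtain ⟨htF, hlt⟩ := Finset.mem_filter.mp ht
      obtain ⟨h1, h2, h3⟩ := hF t htF
      push Not at hlt
      refine ⟨h1, h2, hlt, h3.trans ?_⟩
      have ht1 : (1 : ℝ) ≤ t := by exact_mod_cast h1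
      have ht0 : (0 : ℝ) < t := by linarith
      have htr : (t : ℝ) ≤ r := by exact_mod_cast h2.le
      set q' := d * t with hq'
      have hq'r : (q' : ℝ) = d * t := by rw [hq']; push_cast; ring
      have hq'0 : (0 : ℝ) < q' := by rw [hq'r]; positivity
      have g1 : (q : ℝ) < T * q' := by
        rw [hqr, hq'r]; nlinarith
      have g2 : (q : ℝ) ≤ (q' : ℝ) ^ 2 := by
        have : (q : ℝ) ^ 2 ≤ T ^ 2 * (q' : ℝ) ^ 2 := by
          rw [← mul_pow]; gcongr
        have h' : (q : ℝ) * q ≤ q * (q' : ℝ) ^ 2 := by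
          calc (q : ℝ) * q = q ^ 2 := by ring
            _ ≤ T ^ 2 * (q' : ℝ) ^ 2 := this
            _ ≤ q * (q' : ℝ) ^ 2 := by gcongr
        exact le_of_mul_le_mul_left h' (by linarith)
      have g3 : 3 ≤ q' := by
        have : (3 : ℝ) ≤ q' := by nlinarith
        exact_mod_cast this
      have hl4 : 0 < Real.logb 2 q := Real.logb_pos (by norm_num) (by linarith)
      have g4 : Real.logb 2 q / 2 ≤ Real.logb 2 q' := by
        have := Real.logb_le_logb_of_le (by norm_num : (1:ℝ) < 2) (by linarith) g2
        rw [Real.logb_pow] at this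
        push_cast at this
        linarith
      have g5 : L - 1 ≤ Real.logb 2 (Real.logb 2 q') := by
        have := Real.logb_le_logb_of_le (by norm_num : (1:ℝ) < 2) (by positivity) g4
        rw [Real.logb_div hl4.ne' (by norm_num), Real.logb_self_eq_one (by norm_num),
          ← hLdef] at this
        exact this
      have g6 : L / 2 ≤ Real.logb 2 (Real.logb 2 q') := by linarith
      have p1 : ψ q' ≤ C / ((q' : ℝ) * (L / 2) ^ 2) := by
        refine (hub q' g3).trans ?_
        gcongr
      have p2 : ψ q ≤ C / ((q : ℝ) * L ^ 2) := by
        rw [hLdef]; exact hub q (by omega)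
      have p4 : (t : ℝ) / r ≤ r / t :=
        (by rw [div_le_one hr0]; exact htr : (t : ℝ) / r ≤ 1).trans
          (by rw [one_le_div ht0]; exact htr)
      have hL0 : 0 < L := by linarith
      calc (r : ℝ) * ψ q' + t * ψ q
          ≤ r * (C / ((q' : ℝ) * (L / 2) ^ 2)) + t * (C / ((q : ℝ) * L ^ 2)) := by gcongr
        _ = 4 * C * (r / t) / T + C * (t / r) / T := by
            rw [hqr, hq'r, hTdef]; field_simp; ring
        _ ≤ 4 * C * (r / t) / T + C * (r / t) / T := by gcongr
        _ = (5 * C) * (r / t) / T := by ring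
        _ ≤ (5 * C + 1) * (r / t) / T := by gcongr; linarith)
  push_cast
  calc _ ≤ (r : ℝ) / T + (Real.logb 2 T + 1) * (30 * (5 * C + 1) * r / T) := add_le_add c1 c2
    _ ≤ (Real.logb 2 T + 1) * (r / T) + (Real.logb 2 T + 1) * (30 * (5 * C + 1) * r / T) := by
        gcongr
        have : 0 ≤ (r : ℝ) / T := by positivity
        nlinarith
    _ = _ := by ring

/-- The bound attached to a gcd `d`. -/
noncomputable def Bd (X L C₂ : ℝ) (d : ℕ) : ℝ :=
  2 / X + 4 * C₂ * (L⁻¹ ^ 2 * (Real.logb 2 d / d)) + (if (d : ℝ) < L then 4 * C₂ / L else 0)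

lemma Bd_sum (X L C₂ : ℝ) (hX : 1 ≤ X) (hL : 2 ≤ L) (hC₂ : 0 < C₂) (q : ℕ)
    (hcard : (q.divisors.card : ℝ) ≤ X) :
    ∑ d ∈ q.divisors, Bd X L C₂ d ≤
      4 * C₂ * (L⁻¹ ^ 2 * ∑ d ∈ q.divisors, Real.logb 2 d / d) + (2 + 4 * C₂) := by
  have hX0 : 0 < X := by linarith
  have hL0 : 0 < L := by linarith
  unfold Bd
  rw [Finset.sum_add_distrib, Finset.sum_add_distrib, ← Finset.mul_sum, ← Finset.mul_sum]
  have h1 : ∑ d ∈ q.divisors, 2 / X ≤ 2 := by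
    rw [Finset.sum_const, nsmul_eq_mul, ← mul_div_assoc, div_le_iff₀ hX0]
    linarith
  have h2 : ∑ d ∈ q.divisors, (if (d : ℝ) < L then 4 * C₂ / L else 0) ≤ 4 * C₂ := by
    rw [← Finset.sum_filter, Finset.sum_const, nsmul_eq_mul]
    have hsub : q.divisors.filter (fun d : ℕ => (d : ℝ) < L) ⊆ Finset.Icc 1 ⌊L⌋₊ := by
      intro d hd
      obtain ⟨h3, h4⟩ := Finset.mem_filter.mp hd
      rw [Finset.mem_Icc]
      exact ⟨Nat.pos_of_mem_divisors h3, Nat.le_floor h4.le⟩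
    have h := Finset.card_le_card hsub
    rw [Nat.card_Icc, Nat.add_sub_cancel] at h
    have h' : ((q.divisors.filter (fun d : ℕ => (d : ℝ) < L)).card : ℝ) ≤ L :=
      (by exact_mod_cast h : _ ≤ ((⌊L⌋₊ : ℕ) : ℝ)).trans (Nat.floor_le hL0.le)
    calc _ ≤ L * (4 * C₂ / L) := by gcongr
      _ = 4 * C₂ := by field_simp
  linarith

lemma logT_bound (L C₂ : ℝ) (hL : 2 ≤ L) (hC₂ : 0 < C₂) (d : ℕ) (hd : 1 ≤ d) (X : ℝ)
    (hX : 1 ≤ X) :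
    C₂ * (Real.logb 2 (d * L ^ 2) + 1) / (d * L ^ 2) ≤ Bd X L C₂ d := by
  have hd1 : (1 : ℝ) ≤ d := by exact_mod_cast hd
  have hd0 : (0 : ℝ) < d := by linarith
  have hL0 : 0 < L := by linarith
  have hld : 0 ≤ Real.logb 2 (d : ℝ) := Real.logb_nonneg (by norm_num) hd1
  have hlL : 1 ≤ Real.logb 2 L := by
    rw [Real.le_logb_iff_rpow_le (by norm_num) hL0]; simpa using hL
  have e : Real.logb 2 (d * L ^ 2) = Real.logb 2 d + 2 * Real.logb 2 L := by
    rw [Real.logb_mul hd0.ne' (by positivity), Real.logb_pow]; norm_num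
  rw [e]
  have hX2 : 0 ≤ 2 / X := by positivity
  unfold Bd
  split_ifs with h
  · have h1 : Real.logb 2 (d : ℝ) ≤ Real.logb 2 L :=
      Real.logb_le_logb_of_le (by norm_num) hd0 h.le
    have h2 := logb_two_le_self L hL0
    have h3 : C₂ * (Real.logb 2 d + 2 * Real.logb 2 L + 1) / (d * L ^ 2) ≤ 4 * C₂ / L := by
      calc _ ≤ C₂ * (4 * L) / (1 * L ^ 2) := by
            gcongr
            linarith
        _ = 4 * C₂ / L := by field_simp
    have h4 : 0 ≤ 4 * C₂ * (L⁻¹ ^ 2 * (Real.logb 2 d / d)) := by positivity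
    linarith
  · push Not at h
    have h1 : Real.logb 2 L ≤ Real.logb 2 (d : ℝ) :=
      Real.logb_le_logb_of_le (by norm_num) hL0 h
    have h3 : C₂ * (Real.logb 2 d + 2 * Real.logb 2 L + 1) / (d * L ^ 2) ≤
        4 * C₂ * (L⁻¹ ^ 2 * (Real.logb 2 d / d)) := by
      calc _ ≤ C₂ * (4 * Real.logb 2 d) / (d * L ^ 2) := by
            gcongr
            linarith
        _ = _ := by field_simp
    linarith

/-- Passing from the full sum to the counts for each gcd. -/
lemma fiber_sum (γ : ℝ) (ψ : ℕ → ℝ) (q : ℕ) (hq : 1 ≤ q) (hψ : 0 ≤ ψ q) (B : ℕ → ℝ)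
    (hB : ∀ d r : ℕ, q = d * r → 1 ≤ d → 1 ≤ r → ∀ F : Finset ℕ,
      (∀ t ∈ F, 1 ≤ t ∧ t < r ∧
        dnint (((r - t : ℕ) : ℝ) * γ) ≤ r * ψ (d * t) + t * ψ q) → (F.card : ℝ) ≤ r * B d)
    (P : ℕ → Prop) [DecidablePred P]
    (hP : ∀ q' : ℕ, P q' → dnint (γ * ((q : ℝ) - q') / (Nat.gcd q q' : ℝ))
            ≤ Δfun ψ q q' / (Nat.gcd q q' : ℝ)) :
    ∑ q' ∈ Finset.Ico 1 q, (ψ q / q) * (Nat.gcd q' q : ℝ) * (if P q' then 1 else 0)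
      ≤ ψ q * ∑ d ∈ q.divisors, B d := by
  have hq0 : (0 : ℝ) < q := by exact_mod_cast hq
  have hmaps : ∀ q' ∈ Finset.Ico 1 q, Nat.gcd q' q ∈ q.divisors := by
    intro q' _
    rw [Nat.mem_divisors]
    exact ⟨Nat.gcd_dvd_right _ _, by omega⟩
  rw [← Finset.sum_fiberwise_of_maps_to hmaps, Finset.mul_sum]
  apply Finset.sum_le_sum
  intro d hd
  have hdq := Nat.dvd_of_mem_divisors hd
  have hd1 : 1 ≤ d := Nat.pos_of_mem_divisors hd
  obtain ⟨r, hr⟩ := hdq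
  have hr1 : 1 ≤ r := by
    rcases Nat.eq_zero_or_pos r with h | h
    · rw [h] at hr; omega
    · exact h
  have hd0 : (0 : ℝ) < d := by exact_mod_cast hd1
  have hqr : (q : ℝ) = d * r := by rw [hr]; push_cast; ring
  set H := ((Finset.Ico 1 q).filter (fun q' => Nat.gcd q' q = d)).filter P with hH
  have e1 : ∑ q' ∈ (Finset.Ico 1 q).filter (fun q' => Nat.gcd q' q = d),
      (ψ q / q) * (Nat.gcd q' q : ℝ) * (if P q' then (1 : ℝ) else 0)
      = (ψ q / q) * d * H.card := by
    have : ∀ q' ∈ (Finset.Ico 1 q).filter (fun q' => Nat.gcd q' q = d),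
        (ψ q / q) * (Nat.gcd q' q : ℝ) * (if P q' then (1 : ℝ) else 0)
        = (ψ q / q) * d * (if P q' then (1 : ℝ) else 0) := by
      intro q' hq'
      rw [(Finset.mem_filter.mp hq').2]
    rw [Finset.sum_congr rfl this, ← Finset.mul_sum, Finset.sum_boole]
  rw [e1]
  have hHp : ∀ q' ∈ H, 1 ≤ q' ∧ q' < q ∧ Nat.gcd q' q = d ∧ d * (q' / d) = q' ∧ P q' := by
    intro q' h
    obtain ⟨h1, h2⟩ := Finset.mem_filter.mp h
    obtain ⟨h3, h4⟩ := Finset.mem_filter.mp h1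
    rw [Finset.mem_Ico] at h3
    exact ⟨h3.1, h3.2, h4, Nat.mul_div_cancel' (h4 ▸ Nat.gcd_dvd_left q' q), h2⟩
  have hinj : Set.InjOn (fun q' => q' / d) (H : Set ℕ) := by
    intro x hx y hy hxy
    simp only at hxy
    rw [← (hHp x hx).2.2.2.1, ← (hHp y hy).2.2.2.1, hxy]
  have hc := hB d r hr hd1 hr1 (H.image (fun q' => q' / d)) (by
    intro t ht
    obtain ⟨q', hq', rfl⟩ := Finset.mem_image.mp ht
    obtain ⟨h1, h2, h3, h4, h5⟩ := hHp q' hq'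
    set t := q' / d with htd
    have ht1 : 1 ≤ t := by
      rcases Nat.eq_zero_or_pos t with h | h
      · rw [h] at h4; omega
      · exact h
    have htr : t < r := by
      rw [← h4, hr] at h2
      exact lt_of_mul_lt_mul_left h2 (Nat.zero_le d)
    refine ⟨ht1, htr, ?_⟩
    have h6 := hP q' h5
    rw [Nat.gcd_comm, h3] at h6
    have hq'r : (q' : ℝ) = d * t := by rw [← h4]; push_cast; ring
    have a1 : γ * ((q : ℝ) - q') / d = ((r - t : ℕ) : ℝ) * γ := by
      rw [hqr, hq'r, Nat.cast_sub htr.le]; field_simp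
    have a2 : Δfun ψ q q' / d = r * ψ (d * t) + t * ψ q := by
      unfold Δfun
      rw [hqr, hq'r, h4]; field_simp
    rw [a1, a2] at h6
    exact h6)
  rw [Finset.card_image_of_injOn hinj] at hc
  calc (ψ q / q) * d * H.card ≤ (ψ q / q) * d * (r * B d) := by gcongr
    _ = ψ q / q * (d * r) * B d := by ring
    _ = ψ q * B d := by rw [← hqr]; field_simp

open Classical in
theorem stmt9 (γ : ℝ) (hγ : Irrational γ)
    (ε₀ Cγ : ℝ) (hε₀ : 0 < ε₀) (hCγ : 0 < Cγ)
    (htame : ∀ Q : ℕ, 2 ≤ Q → sigmaExp γ Q ≤ Cγ * (Real.logb 2 Q) ^ ((1:ℝ)/4 - ε₀))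
    (ε₁ : ℝ) (hε₁ : 0 < ε₁) (hε₁' : ε₁ < 2 * ε₀)
    (C : ℝ) (hC : 0 < C)
    (ψ : ℕ → ℝ) (hψ0 : ∀ q, 0 ≤ ψ q)
    (hub : ∀ q : ℕ, 3 ≤ q → ψ q ≤ C / ((q : ℝ) * (Real.logb 2 (Real.logb 2 q)) ^ 2))
    (hψ1 : ψ 1 = 0) (hψ2 : ψ 2 = 0)
    (hΩ : ∀ q : ℕ, 1 ≤ q →
      ((q.primeFactorsList.length : ℝ) > (Real.logb 2 q) ^ ((1:ℝ)/2 + ε₁) → ψ q = 0)) :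
    ∃ C' > (0:ℝ), ∃ C'' > (0:ℝ), ∀ q : ℕ, 16 ≤ q →
      ∑ q' ∈ Finset.Ico 1 q, (ψ q / q) * (Nat.gcd q' q : ℝ) *
        (if dnint (γ * ((q : ℝ) - q') / (Nat.gcd q q' : ℝ))
            ≤ Δfun ψ q q' / (Nat.gcd q q' : ℝ) then 1 else 0)
      ≤ C' * ψ q * (Real.logb 2 (Real.logb 2 q))⁻¹ ^ 2 *
          (∑ r ∈ q.divisors, Real.logb 2 r / r)
        + C'' * ψ q := by
  have hε := eps_le γ hγ ε₀ Cγ htame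
  set a := (1:ℝ)/4 - ε₀ with ha
  set b := (1:ℝ)/2 + ε₁ with hb
  have ha0 : 0 ≤ a := by rw [ha]; linarith
  have hb0 : 0 < b := by rw [hb]; linarith
  have hab : b + 2 * a < 1 := by rw [ha, hb]; linarith
  obtain ⟨c₀, hc₀, hc₁, hLv⟩ := liouville_bound γ hγ a Cγ ha0 htame
  set K := Cγ + 1 with hK
  have hK1 : 1 ≤ K := by linarith
  obtain ⟨l₀, hl₀⟩ := eventually_atTop.mp (params a b K c₀ C ha0 hb0 hab hK1 hc₀)
  set Q₀ := ⌈(2 : ℝ) ^ l₀⌉₊ with hQ₀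
  set C₂ := 30 * (5 * C + 1) + 1 with hC₂
  have hC₂0 : 0 < C₂ := by positivity
  refine ⟨4 * C₂, by positivity, 2 + 4 * C₂ + Q₀, by positivity, ?_⟩
  intro q hq16
  have hq16' : (16 : ℝ) ≤ q := by exact_mod_cast hq16
  have hq0 : (0 : ℝ) < q := by linarith
  have hψq := hψ0 q
  have hsum0 : 0 ≤ ∑ r ∈ q.divisors, Real.logb 2 r / r := by
    apply Finset.sum_nonneg
    intro r hr
    have hr1 : (1 : ℝ) ≤ r := by exact_mod_cast Nat.pos_of_mem_divisors hr
    have := Real.logb_nonneg (by norm_num : (1:ℝ) < 2) hr1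
    positivity
  have hQ0 : (0 : ℝ) ≤ Q₀ := Nat.cast_nonneg _
  have hmain0 : 0 ≤ 4 * C₂ * ψ q * (Real.logb 2 (Real.logb 2 q))⁻¹ ^ 2 *
          (∑ r ∈ q.divisors, Real.logb 2 r / r) := by positivity
  rcases Nat.lt_or_ge q Q₀ with hlt | hge
  · have h1 : ∀ q' ∈ Finset.Ico 1 q, (ψ q / q) * (Nat.gcd q' q : ℝ) *
        (if dnint (γ * ((q : ℝ) - q') / (Nat.gcd q q' : ℝ))
            ≤ Δfun ψ q q' / (Nat.gcd q q' : ℝ) then 1 else 0) ≤ ψ q := by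
      intro q' _
      have hg : (Nat.gcd q' q : ℝ) ≤ q := by
        exact_mod_cast Nat.gcd_le_right q' (by omega)
      calc _ ≤ (ψ q / q) * q * 1 := by
            gcongr
            split_ifs <;> norm_num
        _ = ψ q := by field_simp
    refine (Finset.sum_le_sum h1).trans ?_
    rw [Finset.sum_const, Nat.card_Ico, nsmul_eq_mul]
    have h2 : ((q - 1 : ℕ) : ℝ) ≤ Q₀ := by exact_mod_cast (by omega : q - 1 ≤ Q₀)
    have h3 : ((q - 1 : ℕ) : ℝ) * ψ q ≤ Q₀ * ψ q := by gcongr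
    have h4 : 0 ≤ (2 + 4 * C₂) * ψ q := by positivity
    linarith
  · rcases hψq.eq_or_lt with hz | hpos
    · rw [← hz]; simp
    set l := Real.logb 2 (q : ℝ) with hl
    set L := Real.logb 2 l with hLd
    have hl4 : 4 ≤ l := by
      rw [hl, Real.le_logb_iff_rpow_le (by norm_num) hq0]
      norm_num; linarith
    have hl0 : 0 < l := by linarith
    have hL2 : 2 ≤ L := by
      rw [hLd, Real.le_logb_iff_rpow_le (by norm_num) hl0]
      norm_num; linarith
    have hll : l₀ ≤ l := by
      rw [hl, Real.le_logb_iff_rpow_le (by norm_num) hq0]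
      exact (Nat.le_ceil _).trans (by exact_mod_cast hge)
    have h2l : (2 : ℝ) ^ l = q := Real.rpow_logb (by norm_num) (by norm_num) hq0
    obtain ⟨hp1, hp2, hp3⟩ := hl₀ l hll
    rw [h2l] at hp3
    set S := K * l ^ a with hS
    have hS0 : 0 ≤ S := by positivity
    set X := (2 : ℝ) ^ (l ^ b) with hX
    have hX1 : 1 ≤ X := Real.one_le_rpow (by norm_num) (by positivity)
    have hX0 : 0 < X := by linarith
    have hXq : X ≤ q := by
      rw [← h2l]
      apply Real.rpow_le_rpow_of_exponent_le (by norm_num)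
      calc l ^ b ≤ l ^ (1 : ℝ) :=
            Real.rpow_le_rpow_of_exponent_le (by linarith) (by linarith)
        _ = l := Real.rpow_one l
    have hdiv : (q.divisors.card : ℝ) ≤ X := by
      have h1 : (q.primeFactorsList.length : ℝ) ≤ l ^ b := by
        by_contra hcon
        push Not at hcon
        exact hpos.ne' (hΩ q (by omega) hcon)
      calc (q.divisors.card : ℝ) ≤ (2 : ℝ) ^ q.primeFactorsList.length := by
            exact_mod_cast card_divisors_le_two_pow q (by omega)
        _ = (2 : ℝ) ^ (q.primeFactorsList.length : ℝ) := (Real.rpow_natCast _ _).symm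
        _ ≤ X := Real.rpow_le_rpow_of_exponent_le (by norm_num) h1
    have hLq : ∀ n : ℕ, 1 ≤ n → n ≤ q → c₀ * (n : ℝ) ^ (-S) ≤ dnint (n * γ) :=
      hLv q (by omega)
    have hfs := fiber_sum γ ψ q (by omega) hψq (Bd X L C₂) (by
      intro d r hdr hd1 hr1 F hF
      have hd1' : (1 : ℝ) ≤ d := by exact_mod_cast hd1
      have hd0 : (0 : ℝ) < d := by linarith
      rcases le_total (X ^ (S + 2)) d with hD | hD
      · refine (perd_A γ c₀ S X C hc₀ hS0 hC hX1 hp1 ψ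
          (psi_crude C hC ψ hub hψ1 hψ2) q d r hdr hd1 hr1 hXq hLq hD F hF).trans ?_
        gcongr
        unfold Bd
        have hld : 0 ≤ Real.logb 2 (d : ℝ) := Real.logb_nonneg (by norm_num) hd1'
        have h4 : 0 ≤ 4 * C₂ * (L⁻¹ ^ 2 * (Real.logb 2 d / d)) := by positivity
        have h5 : 0 ≤ (if (d : ℝ) < L then 4 * C₂ / L else 0) := by
          split_ifs <;> positivity
        linarith
      · have hT : (d : ℝ) * L ^ 2 ≤ X ^ (S + 3) := by
          calc (d : ℝ) * L ^ 2 ≤ X ^ (S + 2) * X := by gcongr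
            _ = X ^ (S + 3) := by
              rw [show S + 3 = (S + 2) + 1 by ring, Real.rpow_add hX0 (S + 2) 1, Real.rpow_one]
        have hTq : ((d : ℝ) * L ^ 2) ^ (S + 2) / c₀ ≤ q := by
          refine le_trans ?_ hp3
          rw [Real.rpow_mul hX0.le]
          gcongr
        refine (perd_B γ c₀ S C hc₀ hc₁ hS0 hC ψ hub q d r hq16 hdr hd1 hr1 L _ rfl hL2 rfl
          hLq hTq F hF).trans ?_
        gcongr
        exact logT_bound L C₂ hL2 hC₂0 d hd1 X hX1)
      (fun q' => dnint (γ * ((q : ℝ) - q') / (Nat.gcd q q' : ℝ))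
            ≤ Δfun ψ q q' / (Nat.gcd q q' : ℝ)) (fun q' h => h)
    refine hfs.trans ?_
    have hb' := mul_le_mul_of_nonneg_left (Bd_sum X L C₂ hX1 hL2 hC₂0 q hdiv) hψq
    refine hb'.trans ?_
    have h4 : 0 ≤ (Q₀ : ℝ) * ψ q := by positivity
    have h5 : ψ q * (4 * C₂ * (L⁻¹ ^ 2 * ∑ d ∈ q.divisors, Real.logb 2 d / d) + (2 + 4 * C₂))
      = 4 * C₂ * ψ q * L⁻¹ ^ 2 * (∑ d ∈ q.divisors, Real.logb 2 d / d)
        + (2 + 4 * C₂) * ψ q := by ring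
    rw [h5]
    linarith
end
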